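/- arXiv:2001.09836 — 4 statements merged into one kernel-verified Lean document; each statement's English description precedes it below -/
import Mathlib

section
/- For every finite connected simple graph G=(V,E) with V nonempty, there exists a real number γ ∈ (0,∞) such that, almost surely with respect to the driving randomness, (#V/n)·max_{x∈V} H_{x,n} → γ and (#V/n)·min_{x∈V} H_{x,n} → γ as n → ∞. (Existence of the asymptotic growth parameter γ(G), equation (3).) -/
open MeasureTheory Filter Topology
open scoped ENNReal Classical

/-- The ballistic deposition height process on a graph `G`, started from `h0`,
driven by the sequence of chosen vertices `X`. -/
noncomputable def heightProcess {V : Type*} [Fintype V] (G : SimpleGraph V)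
    (h0 : V → ℕ) (X : ℕ → V) : ℕ → V → ℕ
  | 0 => h0
  | n + 1 => fun x =>
      if x = X n then
        1 + Finset.univ.sup (fun y =>
          if y = x ∨ G.Adj x y then heightProcess G h0 X n y else 0)
      else heightProcess G h0 X n x

/-- `X` is an i.i.d. sequence of uniformly distributed `V`-valued random variables on `(Ω, μ)`:
every finite cylinder event has the product-of-uniform probabilities. -/
def IsUniformIID {V : Type*} [Fintype V] {Ω : Type*} [MeasurableSpace Ω]
    (μ : Measure Ω) (X : ℕ → Ω → V) : Prop :=
  (∀ (n : ℕ) (v : V), MeasurableSet {ω | X n ω = v}) ∧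
  (∀ (n : ℕ) (f : ℕ → V), μ {ω | ∀ k < n, X k ω = f k} = (Fintype.card V : ℝ≥0∞)⁻¹ ^ n)

/-- `γ` is the growth rate of `G`: `γ > 0` and, for any i.i.d. uniform driving sequence,
almost surely `(#V/n) · max_x H_{x,n} → γ` and `(#V/n) · min_x H_{x,n} → γ`. -/
def IsGrowthRate {V : Type*} [Fintype V] (G : SimpleGraph V) (γ : ℝ) : Prop :=
  0 < γ ∧
  ∀ {Ω : Type} [MeasurableSpace Ω] (μ : Measure Ω) [IsProbabilityMeasure μ]
    (X : ℕ → Ω → V), IsUniformIID μ X →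
    (∀ᵐ ω ∂μ, Tendsto (fun n : ℕ =>
        (Fintype.card V : ℝ) *
          (⨆ x : V, (heightProcess G (fun _ => 0) (fun k => X k ω) n x : ℝ)) / n)
      atTop (𝓝 γ)) ∧
    (∀ᵐ ω ∂μ, Tendsto (fun n : ℕ =>
        (Fintype.card V : ℝ) *
          (⨅ x : V, (heightProcess G (fun _ => 0) (fun k => X k ω) n x : ℝ)) / n)
      atTop (𝓝 γ))


namespace BD

variable {V : Type} [Fintype V] (G : SimpleGraph V)

theorem le_nbr (h : V → ℕ) (x y : V) (hy : y = x ∨ G.Adj x y) :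
    h y ≤ Finset.univ.sup (fun y => if y = x ∨ G.Adj x y then h y else 0) := by
  have := Finset.le_sup (f := fun y => if y = x ∨ G.Adj x y then h y else 0) (Finset.mem_univ y)
  simpa [hy] using this

theorem nbr_le (h : V → ℕ) (x : V) (c : ℕ) (hc : ∀ y, y = x ∨ G.Adj x y → h y ≤ c) :
    Finset.univ.sup (fun y => if y = x ∨ G.Adj x y then h y else 0) ≤ c := by
  apply Finset.sup_le
  intro y _
  split_ifs with hh
  · exact hc y hh
  · exact Nat.zero_le _

theorem H_succ (h : V → ℕ) (X : ℕ → V) (n : ℕ) (x : V) :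
    heightProcess G h X (n+1) x = if x = X n then
        1 + Finset.univ.sup (fun y =>
          if y = x ∨ G.Adj x y then heightProcess G h X n y else 0)
      else heightProcess G h X n x := rfl

theorem H_congr (h : V → ℕ) (X Y : ℕ → V) (n : ℕ) (hXY : ∀ k < n, X k = Y k) :
    heightProcess G h X n = heightProcess G h Y n := by
  induction n with
  | zero => rfl
  | succ n ih =>
    have := ih (fun k hk => hXY k (by omega))
    funext x
    rw [H_succ, H_succ, this, hXY n (by omega)]

theorem H_le_add (h h' : V → ℕ) (c : ℕ) (X : ℕ → V) (hh : ∀ x, h x ≤ h' x + c) (n : ℕ) (x : V) :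
    heightProcess G h X n x ≤ heightProcess G h' X n x + c := by
  induction n generalizing x with
  | zero => exact hh x
  | succ n ih =>
    rw [H_succ, H_succ]
    split_ifs with hx
    · have := nbr_le G (heightProcess G h X n) x _ (fun y hy =>
        (ih y).trans (Nat.add_le_add_right (le_nbr G (heightProcess G h' X n) x y hy) c))
      omega
    · exact ih x

theorem add_le_H (h h' : V → ℕ) (c : ℕ) (X : ℕ → V) (hh : ∀ x, h x + c ≤ h' x) (n : ℕ) (x : V) :
    heightProcess G h X n x + c ≤ heightProcess G h' X n x := by
  induction n generalizing x with
  | zero => exact hh x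
  | succ n ih =>
    rw [H_succ, H_succ]
    split_ifs with hx
    · have h1 := nbr_le G (heightProcess G h X n) x
        (Finset.univ.sup (fun y => if y = x ∨ G.Adj x y then heightProcess G h' X n y else 0) - c)
        (fun y hy => by
          have := le_nbr G (heightProcess G h' X n) x y hy
          have := ih y
          omega)
      have := le_nbr G (heightProcess G h' X n) x x (Or.inl rfl)
      have := ih x
      omega
    · exact ih x

theorem H_add (h : V → ℕ) (X : ℕ → V) (m n : ℕ) :
    heightProcess G h X (m + n) = heightProcess G (heightProcess G h X m) (fun i => X (m + i)) n := by
  induction n with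
  | zero => rfl
  | succ n ih =>
    funext x
    rw [← add_assoc, H_succ, H_succ, ih]

theorem H_mono_succ (h : V → ℕ) (X : ℕ → V) (n : ℕ) (x : V) :
    heightProcess G h X n x ≤ heightProcess G h X (n+1) x := by
  rw [H_succ]
  split_ifs
  · have := le_nbr G (heightProcess G h X n) x x (Or.inl rfl)
    omega
  · exact le_rfl

theorem H_mono (h : V → ℕ) (X : ℕ → V) {m n : ℕ} (hmn : m ≤ n) (x : V) :
    heightProcess G h X m x ≤ heightProcess G h X n x :=
  monotone_nat_of_le_succ (fun n => H_mono_succ G h X n x) hmn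

theorem H_le (h : V → ℕ) (X : ℕ → V) (c : ℕ) (hc : ∀ x, h x ≤ c) (n : ℕ) (x : V) :
    heightProcess G h X n x ≤ c + n := by
  induction n generalizing x with
  | zero => exact hc x
  | succ n ih =>
    rw [H_succ]
    split_ifs
    · have := nbr_le G (heightProcess G h X n) x (c+n) (fun y _ => ih y)
      omega
    · have := ih x
      omega

/-- maximal height -/
def mx (h : V → ℕ) : ℕ := Finset.univ.sup h

/-- minimal height -/
def mn [Nonempty V] (h : V → ℕ) : ℕ := Finset.univ.inf' Finset.univ_nonempty h

theorem le_mx (h : V → ℕ) (x : V) : h x ≤ mx h := Finset.le_sup (Finset.mem_univ x)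
theorem mx_le (h : V → ℕ) (c : ℕ) (hc : ∀ x, h x ≤ c) : mx h ≤ c := Finset.sup_le (fun x _ => hc x)
theorem mn_le [Nonempty V] (h : V → ℕ) (x : V) : mn h ≤ h x := Finset.inf'_le _ (Finset.mem_univ x)
theorem le_mn [Nonempty V] (h : V → ℕ) (c : ℕ) (hc : ∀ x, c ≤ h x) : c ≤ mn h :=
  Finset.le_inf' _ _ (fun x _ => hc x)

theorem mn_le_mx [Nonempty V] (h : V → ℕ) : mn h ≤ mx h :=
  (mn_le h (Classical.arbitrary V)).trans (le_mx h _)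

theorem iSup_eq [Nonempty V] (h : V → ℕ) : (⨆ x : V, (h x : ℝ)) = (mx h : ℝ) := by
  apply le_antisymm
  · exact ciSup_le (fun x => by exact_mod_cast le_mx h x)
  · obtain ⟨x, _, hx⟩ := Finset.exists_mem_eq_sup Finset.univ Finset.univ_nonempty h
    unfold mx
    rw [hx]
    exact le_ciSup (f := fun x => (h x : ℝ)) (Set.finite_range _).bddAbove x

theorem iInf_eq [Nonempty V] (h : V → ℕ) : (⨅ x : V, (h x : ℝ)) = (mn h : ℝ) := by
  apply le_antisymm
  · obtain ⟨x, _, hx⟩ := Finset.exists_mem_eq_inf' Finset.univ_nonempty h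
    unfold mn
    rw [hx]
    exact ciInf_le (f := fun x => (h x : ℝ)) (Set.finite_range _).bddBelow x
  · exact le_ciInf (fun x => by exact_mod_cast mn_le h x)

/-- max height at time n from flat -/
noncomputable def M (n : ℕ) (X : ℕ → V) : ℕ := mx (heightProcess G (fun _ => 0) X n)
/-- min height at time n from flat -/
noncomputable def m [Nonempty V] (n : ℕ) (X : ℕ → V) : ℕ := mn (heightProcess G (fun _ => 0) X n)

/-- shift -/
def sh (k : ℕ) (X : ℕ → V) : ℕ → V := fun i => X (k + i)

theorem M_add (X : ℕ → V) (a b : ℕ) : M G (a + b) X ≤ M G a X + M G b (sh a X) := by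
  apply mx_le
  intro x
  rw [H_add]
  refine (H_le_add G _ (fun _ => 0) (M G a X) _ (fun x => ?_) b x).trans ?_
  · simpa [M] using le_mx (heightProcess G (fun _ => 0) X a) x
  · have := le_mx (heightProcess G (fun _ => 0) (sh a X) b) x
    change heightProcess G (fun _ => 0) (sh a X) b x + M G a X ≤ _
    unfold M at *
    omega

theorem m_add [Nonempty V] (X : ℕ → V) (a b : ℕ) : m G a X + m G b (sh a X) ≤ m G (a + b) X := by
  apply le_mn
  intro x
  rw [H_add]
  refine le_trans ?_ (add_le_H G (fun _ => 0) _ (m G a X) _ (fun x => ?_) b x)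
  · have := mn_le (heightProcess G (fun _ => 0) (sh a X) b) x
    change _ ≤ heightProcess G (fun _ => 0) (sh a X) b x + m G a X
    unfold m at *
    omega
  · simpa [m] using mn_le (heightProcess G (fun _ => 0) X a) x

theorem M_le (X : ℕ → V) (n : ℕ) : M G n X ≤ n := by
  apply mx_le
  intro x
  simpa using H_le G (fun _ => 0) X 0 (fun _ => le_rfl) n x

theorem m_le_M [Nonempty V] (X : ℕ → V) (n : ℕ) : m G n X ≤ M G n X := mn_le_mx _

theorem m_mono [Nonempty V] (X : ℕ → V) {a b : ℕ} (hab : a ≤ b) : m G a X ≤ m G b X :=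
  le_mn _ _ (fun x => (mn_le _ x).trans (H_mono G _ X hab x))

theorem n_le (X : ℕ → V) (n : ℕ) : n ≤ Fintype.card V * M G n X := by
  have h1 : n ≤ ∑ x, heightProcess G (fun _ => 0) X n x := by
    induction n with
    | zero => exact Nat.zero_le _
    | succ n ih =>
      have : ∑ x, heightProcess G (fun _ => 0) X n x
          < ∑ x, heightProcess G (fun _ => 0) X (n+1) x := by
        apply Finset.sum_lt_sum (fun x _ => H_mono_succ G _ X n x)
        refine ⟨X n, Finset.mem_univ _, ?_⟩
        rw [H_succ, if_pos rfl]
        have := le_nbr G (heightProcess G (fun _ => 0) X n) (X n) (X n) (Or.inl rfl)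
        omega
      omega
  refine h1.trans ?_
  calc _ ≤ ∑ x : V, M G n X := Finset.sum_le_sum (fun x _ => le_mx _ x)
    _ = _ := by simp

theorem M_block (X : ℕ → V) (k q : ℕ) :
    M G (k * q) X ≤ ∑ i ∈ Finset.range q, M G k (sh (k * i) X) := by
  induction q with
  | zero => simpa using M_le G X 0
  | succ q ih =>
    rw [Finset.sum_range_succ, Nat.mul_succ]
    exact (M_add G X _ _).trans (Nat.add_le_add_right ih _)

theorem m_block [Nonempty V] (X : ℕ → V) (k q : ℕ) :
    ∑ i ∈ Finset.range q, m G k (sh (k * i) X) ≤ m G (k * q) X := by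
  induction q with
  | zero => simp
  | succ q ih =>
    rw [Finset.sum_range_succ, Nat.mul_succ]
    exact (Nat.add_le_add_right ih _).trans (m_add G X _ _)

/-- word property -/
def Good (L : ℕ) (w : ℕ → V) (y x : V) : Prop :=
  ∀ X : ℕ → V, (∀ i < L, X i = w i) → ∀ h : V → ℕ, h y ≤ heightProcess G h X L x

theorem good_pair (y x : V) (hr : G.Reachable y x) : ∃ L w, Good G L w y x := by
  rw [SimpleGraph.reachable_iff_reflTransGen] at hr
  induction hr with
  | refl => exact ⟨0, fun _ => y, fun X _ h => le_rfl⟩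
  | @tail b c _ hbc ih =>
    obtain ⟨L, w, hw⟩ := ih
    refine ⟨L + 1, fun i => if i < L then w i else c, fun X hX h => ?_⟩
    have h1 := hw X (fun i hi => by simpa [hi] using hX i (by omega)) h
    have h2 : X L = c := by simpa using hX L (by omega)
    rw [H_succ, if_pos h2.symm]
    have := le_nbr G (heightProcess G h X L) c b (Or.inr hbc.symm)
    omega

theorem good_all (hG : G.Connected) (S : Finset (V × V)) :
    ∃ L w, ∀ p ∈ S, Good G L w p.1 p.2 := by
  induction S using Finset.induction_on with
  | empty =>
    obtain ⟨v⟩ := hG.nonempty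
    exact ⟨0, fun _ => v, by simp⟩
  | insert a S _ ih =>
    obtain ⟨L, w, hw⟩ := ih
    obtain ⟨L', w', hw'⟩ := good_pair G a.1 a.2 (hG.preconnected a.1 a.2)
    refine ⟨L + L', fun i => if i < L then w i else w' (i - L), fun p hp X hX h => ?_⟩
    rcases Finset.mem_insert.1 hp with rfl | hp
    · rw [H_add]
      refine le_trans (H_mono G h X (Nat.zero_le L) p.1) (hw' _ (fun i hi => ?_) _)
      simpa using hX (L + i) (by omega)
    · refine le_trans (hw p hp X (fun i hi => ?_) h) (H_mono G h X (Nat.le_add_right _ _) _)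
      simpa [hi] using hX i (by omega)

theorem good_word (hG : G.Connected) :
    ∃ L w, 0 < L ∧ ∀ y x, Good G L w y x := by
  obtain ⟨L, w, hw⟩ := good_all G hG Finset.univ
  refine ⟨L + 1, w, Nat.succ_pos _, fun y x X hX h => ?_⟩
  exact (hw (y, x) (Finset.mem_univ _) X (fun i hi => hX i (by omega)) h).trans
    (H_mono_succ G h X L x)

/-- gap -/
noncomputable def gap [Nonempty V] (n : ℕ) (X : ℕ → V) : ℝ := (M G n X : ℝ) - m G n X

theorem M_le_m [Nonempty V] {L : ℕ} {w : ℕ → V} (hw : ∀ y x, Good G L w y x) (X : ℕ → V) (n : ℕ)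
    (hX : ∀ i < L, sh n X i = w i) : M G n X ≤ m G (n + L) X := by
  apply mx_le
  intro y
  apply le_mn
  intro x
  rw [H_add]
  exact hw y x (sh n X) hX _

/-- indicator that the word does not occur -/
noncomputable def A (L : ℕ) (w : ℕ → V) (X : ℕ → V) : ℝ := if ∀ i < L, X i = w i then 0 else 1

theorem gap_rec [Nonempty V] {L : ℕ} {w : ℕ → V} (hw : ∀ y x, Good G L w y x) (X : ℕ → V) (n : ℕ) :
    gap G (n + L) X ≤ L + A L w (sh n X) * gap G n X := by
  have h1 : (M G (n + L) X : ℝ) ≤ M G n X + L := by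
    have := M_add G X n L
    have := M_le G (sh n X) L
    exact_mod_cast (by omega : M G (n + L) X ≤ M G n X + L)
  unfold A gap
  split_ifs with h
  · have : (M G n X : ℝ) ≤ m G (n + L) X := by exact_mod_cast M_le_m G hw X n h
    linarith
  · have : (m G n X : ℝ) ≤ m G (n + L) X := by exact_mod_cast m_mono G X (Nat.le_add_right n L)
    linarith

section prob

open ProbabilityTheory

variable [Nonempty V] [MeasurableSpace V] [DiscreteMeasurableSpace V]

variable (V) in
/-- canonical measure -/
noncomputable def P : Measure (ℕ → V) :=
  Measure.infinitePi (fun _ : ℕ => (PMF.uniformOfFintype V).toMeasure)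

instance : IsProbabilityMeasure (P V) := by unfold P; infer_instance

theorem sh_mp (k : ℕ) : MeasurePreserving (sh (V := V) k) (P V) (P V) := by
  refine ⟨measurable_pi_iff.2 fun i => measurable_pi_apply _, ?_⟩
  exact Measure.map_infinitePi_infinitePi_of_inj
    (P := fun _ : ℕ => (PMF.uniformOfFintype V).toMeasure) (f := fun i => k + i)
    (add_right_injective k)

theorem cyl_P (n : ℕ) (f : ℕ → V) :
    P V {X | ∀ k < n, X k = f k} = (Fintype.card V : ℝ≥0∞)⁻¹ ^ n := by
  have h : {X : ℕ → V | ∀ k < n, X k = f k} =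
      Set.pi (Finset.range n : Set ℕ) (fun k => {f k}) := by
    ext X; simp [Set.mem_pi]
  rw [h, P, Measure.infinitePi_pi _ (fun i _ => MeasurableSet.of_discrete)]
  simp

theorem map_eq_P {Ω : Type} [MeasurableSpace Ω] (μ : Measure Ω) [IsProbabilityMeasure μ]
    (X : ℕ → Ω → V) (hX : IsUniformIID μ X) (hm : Measurable (fun ω k => X k ω)) :
    μ.map (fun ω k => X k ω) = P V := by
  have := Measure.isProbabilityMeasure_map (μ := μ) hm.aemeasurable
  have hC : ∀ n (f : ℕ → V), MeasurableSet {X : ℕ → V | ∀ k < n, X k = f k} := by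
    intro n f
    have h : {X : ℕ → V | ∀ k < n, X k = f k} =
      Set.pi (Finset.range n : Set ℕ) (fun k => {f k}) := by
      ext X; simp [Set.mem_pi]
    rw [h]
    exact MeasurableSet.pi (Finset.countable_toSet _) (fun _ _ => MeasurableSet.of_discrete)
  refine MeasureTheory.ext_of_generate_finite
    {s | ∃ n, ∃ f : ℕ → V, s = {X : ℕ → V | ∀ k < n, X k = f k}} ?_ ?_ ?_ ?_
  · apply le_antisymm
    · refine iSup_le fun k => ?_
      rw [← measurable_iff_comap_le]
      refine @measurable_to_countable' _ _ _ _ (_) _ fun v => ?_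
      have : (fun a : ℕ → V => a k) ⁻¹' {v} = ⋃ g : Fin (k + 1) → V,
          ⋃ (_ : g (Fin.last k) = v),
          {X : ℕ → V | ∀ j < k + 1, X j = (fun i => if h : i < k + 1 then g ⟨i, h⟩ else v) j} := by
        ext X
        simp only [Set.mem_preimage, Set.mem_singleton_iff, Set.mem_iUnion, Set.mem_setOf_eq]
        constructor
        · intro h
          refine ⟨fun i => X i, by simpa using h, fun j hj => by simp [hj]⟩
        · rintro ⟨g, hg, h⟩
          have := h k (by omega)
          simp at this
          rw [this, ← hg]
          rfl
      rw [this]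
      refine MeasurableSet.iUnion fun g => MeasurableSet.iUnion fun _ => ?_
      exact MeasurableSpace.measurableSet_generateFrom ⟨_, _, rfl⟩
    · refine MeasurableSpace.generateFrom_le ?_
      rintro s ⟨n, f, rfl⟩
      exact hC n f
  · rintro s ⟨n, f, rfl⟩ t ⟨n', f', rfl⟩ ⟨Y, hY, hY'⟩
    refine ⟨max n n', Y, ?_⟩
    ext X
    simp only [Set.mem_inter_iff, Set.mem_setOf_eq] at *
    constructor
    · rintro ⟨h1, h2⟩ k hk
      rcases lt_max_iff.1 hk with h | h
      · rw [h1 k h, hY k h]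
      · rw [h2 k h, hY' k h]
    · intro h
      exact ⟨fun k hk => by rw [h k (lt_max_of_lt_left hk), hY k hk],
        fun k hk => by rw [h k (lt_max_of_lt_right hk), hY' k hk]⟩
  · rintro s ⟨n, f, rfl⟩
    rw [Measure.map_apply hm (hC n f), cyl_P, ← hX.2 n f]
    rfl
  · simp

theorem factor {f : (ℕ → V) → ℝ} {S : Finset ℕ} (hf : DependsOn f (S : Set ℕ)) :
    ∃ φ : (S → V) → ℝ, f = φ ∘ (fun X (i : S) => X i) := by
  refine ⟨fun g => f (fun i => if h : i ∈ S then g ⟨i, h⟩ else Classical.arbitrary V), ?_⟩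
  funext X
  refine hf fun i hi => ?_
  have : i ∈ S := hi
  simp [this]

theorem meas_of_dep {f : (ℕ → V) → ℝ} {S : Finset ℕ} (hf : DependsOn f (S : Set ℕ)) :
    Measurable f := by
  obtain ⟨φ, rfl⟩ := factor hf
  exact (measurable_of_countable φ).comp (measurable_pi_iff.2 fun i => measurable_pi_apply _)

theorem indep_of_dep {f g : (ℕ → V) → ℝ} {S T : Finset ℕ} (hf : DependsOn f (S : Set ℕ))
    (hg : DependsOn g (T : Set ℕ)) (hST : Disjoint S T) : IndepFun f g (P V) := by
  obtain ⟨φ, rfl⟩ := factor hf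
  obtain ⟨ψ, rfl⟩ := factor hg
  have h := iIndepFun.indepFun_finset S T hST
    (iIndepFun_infinitePi (P := fun _ : ℕ => (PMF.uniformOfFintype V).toMeasure)
      (X := fun _ (ω : V) => ω) (fun _ => measurable_id)) (fun i => measurable_pi_apply i)
  exact h.comp (measurable_of_countable φ) (measurable_of_countable ψ)

theorem dep_sh {f : (ℕ → V) → ℝ} {n : ℕ} (hf : DependsOn f (Finset.range n : Set ℕ)) (a : ℕ) :
    DependsOn (fun X => f (sh a X)) (Finset.Ico a (a + n) : Set ℕ) := by
  intro X Y h
  refine hf fun i hi => ?_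
  have : i < n := by simpa using hi
  exact h (a + i) (by simp; omega)

theorem dep_M (n : ℕ) : DependsOn (fun X : ℕ → V => (M G n X : ℝ)) (Finset.range n : Set ℕ) := by
  intro X Y h
  have := H_congr G (fun _ => 0) X Y n (fun k hk => h k (by simpa using hk))
  simp only [M, this]

theorem dep_m (n : ℕ) : DependsOn (fun X : ℕ → V => (m G n X : ℝ)) (Finset.range n : Set ℕ) := by
  intro X Y h
  have := H_congr G (fun _ => 0) X Y n (fun k hk => h k (by simpa using hk))
  simp only [m, this]

theorem dep_gap (n : ℕ) : DependsOn (fun X : ℕ → V => gap G n X) (Finset.range n : Set ℕ) := by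
  intro X Y h
  have := H_congr G (fun _ => 0) X Y n (fun k hk => h k (by simpa using hk))
  simp only [gap, M, m, this]

theorem dep_A (n : ℕ) (w : ℕ → V) :
    DependsOn (fun X : ℕ → V => A n w X) (Finset.range n : Set ℕ) := by
  intro X Y h
  have : (∀ i < n, X i = w i) ↔ (∀ i < n, Y i = w i) :=
    forall₂_congr fun i hi => by rw [h i (by simpa using hi)]
  simp only [A, this]

theorem int_of_dep {f : (ℕ → V) → ℝ} {S : Finset ℕ} (hf : DependsOn f (S : Set ℕ)) (C : ℝ)
    (h0 : ∀ X, 0 ≤ f X) (hC : ∀ X, f X ≤ C) : Integrable f (P V) := by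
  refine Integrable.of_bound (meas_of_dep hf).aestronglyMeasurable C (ae_of_all _ fun X => ?_)
  rw [Real.norm_eq_abs, abs_of_nonneg (h0 X)]
  exact hC X

theorem int_M (n : ℕ) : Integrable (fun X : ℕ → V => (M G n X : ℝ)) (P V) :=
  int_of_dep (dep_M G n) n (fun _ => Nat.cast_nonneg _) (fun X => by exact_mod_cast M_le G X n)

theorem int_m (n : ℕ) : Integrable (fun X : ℕ → V => (m G n X : ℝ)) (P V) :=
  int_of_dep (dep_m G n) n (fun _ => Nat.cast_nonneg _)
    (fun X => by exact_mod_cast (m_le_M G X n).trans (M_le G X n))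

theorem int_gap (n : ℕ) : Integrable (fun X : ℕ → V => gap G n X) (P V) :=
  (int_M G n).sub (int_m G n)

/-- SLLN over blocks -/
theorem slln {f : (ℕ → V) → ℝ} {k : ℕ} (hf : DependsOn f (Finset.range k : Set ℕ))
    (hi : Integrable f (P V)) :
    ∀ᵐ X ∂(P V), Tendsto (fun q : ℕ => (∑ i ∈ Finset.range q, f (sh (k * i) X)) / q) atTop
      (𝓝 (∫ X, f X ∂(P V))) := by
  have h0 : ∀ X : ℕ → V, sh 0 X = X := fun X => by funext i; simp [sh]
  have := strong_law_ae_real (μ := P V) (fun i X => f (sh (k * i) X)) (by simpa [h0] using hi)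
    (fun i j hij => by
      refine indep_of_dep (dep_sh hf _) (dep_sh hf _) ?_
      rw [Finset.disjoint_left]
      intro a ha hb
      simp only [Finset.mem_Ico] at ha hb
      rcases lt_or_gt_of_ne hij with h | h
      · have := Nat.mul_le_mul_left k (Nat.succ_le_of_lt h)
        rw [Nat.mul_succ] at this
        omega
      · have := Nat.mul_le_mul_left k (Nat.succ_le_of_lt h)
        rw [Nat.mul_succ] at this
        omega)
    (fun i => by
      have hmf := meas_of_dep hf
      have := (IdentDistrib.refl (μ := P V) hmf.aemeasurable)
      refine ⟨(hmf.comp (sh_mp _).measurable).aemeasurable,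
        (hmf.comp (sh_mp _).measurable).aemeasurable, ?_⟩
      change Measure.map (f ∘ sh _) _ = Measure.map (f ∘ sh _) _
      rw [← Measure.map_map hmf (sh_mp _).measurable, ← Measure.map_map hmf (sh_mp _).measurable,
        (sh_mp _).map_eq, (sh_mp _).map_eq])
  simpa [h0] using this

theorem div_tendsto (k : ℕ) (hk : 0 < k) :
    Tendsto (fun n : ℕ => ((n / k : ℕ) : ℝ) / n) atTop (𝓝 (1 / k)) := by
  have hk' : (0 : ℝ) < k := by exact_mod_cast hk
  have := (tendsto_nat_floor_mul_div_atTop (R := ℝ) (a := 1 / k) (by positivity)).comp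
    (tendsto_natCast_atTop_atTop (R := ℝ))
  refine this.congr fun n => ?_
  simp only [Function.comp]
  rw [one_div, inv_mul_eq_div, Nat.floor_div_eq_div]

theorem block_tendsto {S : ℕ → ℝ} {a : ℝ} {k : ℕ} (hk : 0 < k)
    (hS : Tendsto (fun q : ℕ => S q / q) atTop (𝓝 a)) (c : ℝ) :
    Tendsto (fun n : ℕ => (S (n / k) + c) / n) atTop (𝓝 (a / k)) := by
  have h1 := (hS.comp (Nat.tendsto_div_const_atTop hk.ne')).mul (div_tendsto k hk)
  have h2 := h1.add (tendsto_const_div_atTop_nhds_zero_nat c)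
  rw [add_zero, mul_one_div] at h2
  refine h2.congr' ?_
  filter_upwards [eventually_ge_atTop k] with n hn
  have hq : ((n / k : ℕ) : ℝ) ≠ 0 := by
    have := Nat.div_pos hn hk
    exact_mod_cast this.ne'
  simp only [Function.comp]
  rw [add_div, div_mul_div_cancel₀ hq]

theorem M_upper (X : ℕ → V) (k n : ℕ) (hk : 0 < k) :
    (M G n X : ℝ) / n ≤ (∑ i ∈ Finset.range (n / k), (M G k (sh (k * i) X) : ℝ) + k) / n := by
  gcongr
  have h1 := M_add G X (k * (n / k)) (n % k)
  rw [Nat.div_add_mod] at h1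
  have h2 := M_block G X k (n / k)
  have h3 := M_le G (sh (k * (n / k)) X) (n % k)
  have h4 := Nat.mod_lt n hk
  exact_mod_cast (by omega : M G n X ≤ ∑ i ∈ Finset.range (n / k), M G k (sh (k * i) X) + k)

theorem m_lower (X : ℕ → V) (k n : ℕ) :
    (∑ i ∈ Finset.range (n / k), (m G k (sh (k * i) X) : ℝ) + 0) / n ≤ (m G n X : ℝ) / n := by
  gcongr
  rw [add_zero]
  exact_mod_cast (m_block G X k (n / k)).trans (m_mono G X (Nat.mul_div_le n k))

theorem gap_bound (hG : G.Connected) : ∃ L : ℕ, 0 < L ∧ ∃ C : ℝ, ∀ j : ℕ,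
    ∫ X, gap G (L * j) X ∂(P V) ≤ C := by
  obtain ⟨L, w, hL, hw⟩ := good_word G hG
  have hA0 : ∀ X : ℕ → V, 0 ≤ A L w X := fun X => by unfold A; split_ifs <;> norm_num
  have hA1 : ∀ X : ℕ → V, A L w X ≤ 1 := fun X => by unfold A; split_ifs <;> norm_num
  have iA := int_of_dep (dep_A L w) 1 hA0 hA1
  obtain ⟨r, hr⟩ : ∃ r, r = ∫ X, A L w X ∂(P V) := ⟨_, rfl⟩
  have hr0 : 0 ≤ r := hr ▸ integral_nonneg hA0
  have hr1 : r < 1 := by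
    have hle : r ≤ 1 := by
      rw [hr]
      calc _ ≤ ∫ X, (1 : ℝ) ∂(P V) := integral_mono iA (integrable_const _) hA1
        _ = 1 := by simp
    refine lt_of_le_of_ne hle fun h => ?_
    have h2 : ∫ X, (1 - A L w X) ∂(P V) = 0 := by
      rw [integral_sub (integrable_const _) iA, ← hr, h]; simp
    rw [integral_eq_zero_iff_of_nonneg (fun X => sub_nonneg.2 (hA1 X))
      ((integrable_const _).sub iA)] at h2
    have h3 : P V {X | ∀ k < L, X k = w k} = 0 := by
      refine measure_mono_null ?_ h2
      intro X hX
      have hX' : ∀ k < L, X k = w k := hX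
      have hA : A L w X = 0 := if_pos hX'
      simp [hA]
    rw [cyl_P] at h3
    simp at h3
  have hrec : ∀ n, ∫ X, gap G (n + L) X ∂(P V) ≤ L + r * ∫ X, gap G n X ∂(P V) := by
    intro n
    have hd := dep_sh (dep_A L w) n
    have hind : IndepFun (fun X => A L w (sh n X)) (fun X => gap G n X) (P V) := by
      refine indep_of_dep hd (dep_gap G n) ?_
      rw [Finset.disjoint_left]
      intro a ha hb
      simp at ha hb
      omega
    have iA' := int_of_dep hd 1 (fun X => hA0 _) (fun X => hA1 _)
    have hmul := hind.integral_fun_mul_eq_mul_integral iA'.aestronglyMeasurable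
      (int_gap G n).aestronglyMeasurable
    have him : Integrable (fun X => A L w (sh n X) * gap G n X) (P V) :=
      hind.integrable_mul iA' (int_gap G n)
    have hAs : ∫ X, A L w (sh n X) ∂(P V) = r := by
      have e := integral_map (μ := P V) (φ := sh n) (f := fun X => A L w X)
        (sh_mp n).measurable.aemeasurable (meas_of_dep (dep_A L w)).aestronglyMeasurable
      rw [(sh_mp n).map_eq] at e
      rw [hr, e]
    calc _ ≤ ∫ X, ((L : ℝ) + A L w (sh n X) * gap G n X) ∂(P V) :=
          integral_mono (int_gap G _) ((integrable_const _).add him) (fun X => gap_rec G hw X n)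
      _ = L + ∫ X, A L w (sh n X) * gap G n X ∂(P V) := by
          rw [integral_add (integrable_const _) him]; simp
      _ = _ := by rw [hmul, hAs]
  refine ⟨L, hL, L / (1 - r), fun j => ?_⟩
  have h1r : 0 < 1 - r := by linarith
  induction j with
  | zero =>
    have : ∀ X : ℕ → V, gap G (L * 0) X ≤ 0 := fun X => by
      have h := M_le G X 0
      have h' : M G 0 X = 0 := by omega
      simp [gap, h']
    exact (integral_nonpos this).trans (by positivity)
  | succ j ih =>
    rw [Nat.mul_succ]
    refine (hrec _).trans ?_
    have := mul_le_mul_of_nonneg_left ih hr0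
    have e : (L : ℝ) + r * (L / (1 - r)) = L / (1 - r) := by field_simp; ring
    linarith

theorem canonical (hG : G.Connected) : ∃ γ : ℝ, 0 < γ ∧ ∀ᵐ X ∂(P V),
    Tendsto (fun n : ℕ => (M G n X : ℝ) / n) atTop (𝓝 γ) ∧
    Tendsto (fun n : ℕ => (m G n X : ℝ) / n) atTop (𝓝 γ) := by
  obtain ⟨L, hL, C, hC⟩ := gap_bound G hG
  let K : ℕ → ℕ := fun j => L * (j + 1)
  have hK : ∀ j, 0 < K j := fun j => by positivity
  let a : ℕ → ℝ := fun j => (∫ X, (M G (K j) X : ℝ) ∂(P V)) / K j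
  let b : ℕ → ℝ := fun j => (∫ X, (m G (K j) X : ℝ) ∂(P V)) / K j
  have hN : (0 : ℝ) < Fintype.card V := by exact_mod_cast Fintype.card_pos
  have ha : ∀ j, 1 / (Fintype.card V : ℝ) ≤ a j := by
    intro j
    have hKj : (0 : ℝ) < K j := by exact_mod_cast hK j
    have : (K j : ℝ) / Fintype.card V ≤ ∫ X, (M G (K j) X : ℝ) ∂(P V) := by
      calc _ = ∫ X, (K j : ℝ) / Fintype.card V ∂(P V) := by simp
        _ ≤ _ := integral_mono (integrable_const _) (int_M G _) (fun X => by
          rw [div_le_iff₀ hN, mul_comm]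
          exact_mod_cast n_le G X (K j))
    rw [le_div_iff₀ hKj]
    refine le_trans (le_of_eq ?_) this
    ring
  have hbdd : BddBelow (Set.range a) := ⟨1 / (Fintype.card V : ℝ), by rintro _ ⟨j, rfl⟩; exact ha j⟩
  have hab : ∀ j, a j - b j ≤ C / K j := by
    intro j
    have h := hC (j + 1)
    simp only [gap] at h
    rw [integral_sub (int_M G _) (int_m G _)] at h
    simp only [a, b]
    rw [← sub_div]
    gcongr
  have hCK : Tendsto (fun j => C / K j) atTop (𝓝 0) := by
    refine (tendsto_const_div_atTop_nhds_zero_nat C).comp ?_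
    refine tendsto_atTop_mono (fun j => ?_) tendsto_id
    simp only [K, id]
    nlinarith
  refine ⟨⨅ j, a j, lt_of_lt_of_le (by positivity) (le_ciInf ha), ?_⟩
  have hM := ae_all_iff.2 fun j => slln (dep_M G (K j)) (int_M G (K j))
  have hm := ae_all_iff.2 fun j => slln (dep_m G (K j)) (int_m G (K j))
  filter_upwards [hM, hm] with X hMX hmX
  have hle : ∀ n : ℕ, (m G n X : ℝ) / n ≤ (M G n X : ℝ) / n := fun n => by
    gcongr
    exact m_le_M G X n
  have lo : ∀ c < ⨅ j, a j, ∀ᶠ n : ℕ in atTop, c < (m G n X : ℝ) / n := by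
    intro c hc
    obtain ⟨j, hj⟩ := (hCK.eventually_lt_const (sub_pos.2 hc)).exists
    have h1 := hab j
    have h2 : ⨅ j, a j ≤ a j := ciInf_le hbdd j
    have h3 : c < b j := by linarith
    filter_upwards [(block_tendsto (hK j) (hmX j) 0).eventually_const_lt h3] with n hn
    exact hn.trans_le (m_lower G X (K j) n)
  have hi : ∀ c > ⨅ j, a j, ∀ᶠ n : ℕ in atTop, (M G n X : ℝ) / n < c := by
    intro c hc
    obtain ⟨j, hj⟩ := exists_lt_of_ciInf_lt hc
    filter_upwards [(block_tendsto (hK j) (hMX j) (K j)).eventually_lt_const hj] with n hn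
    exact (M_upper G X (K j) n (hK j)).trans_lt hn
  constructor
  · refine tendsto_order.2 ⟨fun c hc => ?_, hi⟩
    filter_upwards [lo c hc] with n hn
    exact hn.trans_le (hle n)
  · refine tendsto_order.2 ⟨lo, fun c hc => ?_⟩
    filter_upwards [hi c hc] with n hn
    exact (hle n).trans_lt hn

end prob

end BD

theorem stmt0 {V : Type} [Fintype V] [Nonempty V] (G : SimpleGraph V)
    (hG : G.Connected) : ∃ γ : ℝ, IsGrowthRate G γ := by
  letI : MeasurableSpace V := ⊤
  haveI : DiscreteMeasurableSpace V := ⟨fun _ => trivial⟩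
  obtain ⟨γ, hγ, h⟩ := BD.canonical G hG
  have hN : (0 : ℝ) < Fintype.card V := by exact_mod_cast Fintype.card_pos
  refine ⟨Fintype.card V * γ, by positivity, ?_⟩
  intro Ω _ μ _ X hX
  have hm : Measurable (fun ω k => X k ω) := by
    refine measurable_pi_iff.2 fun k => measurable_to_countable' fun v => ?_
    exact hX.1 k v
  rw [← BD.map_eq_P μ X hX hm] at h
  have h' := ae_of_ae_map hm.aemeasurable h
  constructor
  · filter_upwards [h'] with ω hω
    refine (hω.1.const_mul (Fintype.card V : ℝ)).congr fun n => ?_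
    rw [BD.iSup_eq, mul_div_assoc]
    rfl
  · filter_upwards [h'] with ω hω
    refine (hω.2.const_mul (Fintype.card V : ℝ)).congr fun n => ?_
    rw [BD.iInf_eq, mul_div_assoc]
    rfl
end

section
/- Let N ≥ 0, n ≥ 1 and m ≥ 2 with m even, and N ≥ 1 if m = 2. Let G be the graph with vertex set V = ({1,…,n} × {0,…,m−1}) ∪ {x_1,…,x_N}, where (i,j) and (i',j') are adjacent if and only if they are distinct and j' ≢ j + m/2 (mod m), and each x_i is adjacent to every other vertex of V. (This is the graph obtained from the complete graph K_m minus a perfect matching by cloning every vertex n−1 times and adding N dominant vertices; #V = N + nm.) Set κ := #V/(2n) and τ := (√(κ²−1) − κ + 1)^{−1}. Then G has growth rate γ(G) = #V − (n²m/#V) · τ/(τ + 1/(2κ)). -/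
open MeasureTheory Filter Topology
open scoped ENNReal Classical

/-- The graph obtained from the "cocktail party" graph `R_m` (complete graph on `m` vertices
minus a perfect matching, `m` even) by cloning every vertex `n − 1` times and adding `N`
dominant vertices: vertices `(i,j)` and `(i',j')` are adjacent iff they are distinct and
`j' ≢ j + m/2 (mod m)`, and each of the `N` extra vertices is adjacent to everything else. -/
def cloneGraph (N n m : ℕ) : SimpleGraph ((Fin n × Fin m) ⊕ Fin N) :=
  SimpleGraph.fromRel fun a b =>
    match a, b with
    | Sum.inl (_, j), Sum.inl (_, j') => ¬ ((j' : ℕ) % m = ((j : ℕ) + m / 2) % m)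
    | _, _ => True

/-- Extend a finite prefix to a sequence. -/
def extSeq {V : Type*} (v0 : V) {n : ℕ} (f : Fin n → V) : ℕ → V :=
  fun k => if h : k < n then f ⟨k, h⟩ else v0

theorem integral_prefix {V : Type*} [Fintype V] {Ω : Type*} [MeasurableSpace Ω]
    (μ : Measure Ω) [IsProbabilityMeasure μ] (X : ℕ → Ω → V) (hX : IsUniformIID μ X) (v0 : V)
    (n : ℕ) (F : (ℕ → V) → ℝ) (hF : ∀ x y : ℕ → V, (∀ k < n, x k = y k) → F x = F y) :
    Integrable (fun ω => F (fun k => X k ω)) μ ∧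
    ∫ ω, F (fun k => X k ω) ∂μ =
      ((Fintype.card V : ℝ)⁻¹) ^ n * ∑ f : Fin n → V, F (extSeq v0 f) := by
  have hmeas : ∀ f : Fin n → V, MeasurableSet {ω | ∀ k < n, X k ω = extSeq v0 f k} := by
    intro f
    have : {ω | ∀ k < n, X k ω = extSeq v0 f k} =
        ⋂ k : ℕ, ⋂ _ : k < n, {ω | X k ω = extSeq v0 f k} := by
      ext ω; simp
    rw [this]
    exact MeasurableSet.iInter fun k => MeasurableSet.iInter fun _ => hX.1 k _
  have hexp : (fun ω => F (fun k => X k ω)) = fun ω => ∑ f : Fin n → V,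
      Set.indicator {ω | ∀ k < n, X k ω = extSeq v0 f k} (fun _ => F (extSeq v0 f)) ω := by
    funext ω
    rw [Finset.sum_eq_single (fun k : Fin n => X k ω)]
    · rw [Set.indicator_of_mem]
      · apply hF
        intro k hk
        simp [extSeq, hk]
      · intro k hk
        simp [extSeq, hk]
    · intro f _ hf
      rw [Set.indicator_of_notMem]
      intro h
      apply hf
      funext k
      have := h k k.2
      simp only [extSeq, k.2, dite_true] at this
      exact this.symm
    · simp
  have hint : ∀ f : Fin n → V, Integrable (Set.indicator
      {ω | ∀ k < n, X k ω = extSeq v0 f k} (fun _ => F (extSeq v0 f))) μ := by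
    intro f
    exact (integrable_const _).indicator (hmeas f)
  rw [hexp]
  refine ⟨integrable_finsetSum _ fun f _ => hint f, ?_⟩
  rw [integral_finsetSum _ fun f _ => hint f, Finset.mul_sum]
  refine Finset.sum_congr rfl fun f _ => ?_
  rw [integral_indicator (hmeas f), setIntegral_const, Measure.real, hX.2 n]
  simp

/-- Run a deterministic automaton. -/
def runState {V S : Type*} (step : S → V → S) (s0 : S) (x : ℕ → V) : ℕ → S
  | 0 => s0
  | n + 1 => step (runState step s0 x n) (x n)

theorem runState_congr {V S : Type*} (step : S → V → S) (s0 : S) (x y : ℕ → V) (n : ℕ)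
    (h : ∀ k < n, x k = y k) : runState step s0 x n = runState step s0 y n := by
  induction n with
  | zero => rfl
  | succ n ih =>
    simp only [runState]
    rw [ih fun k hk => h k (by omega), h n (by omega)]

/-- The accumulated noise. -/
def noiseSum {V S : Type*} (step : S → V → S) (s0 : S) (ξ : S → V → ℝ) (x : ℕ → V) (n : ℕ) : ℝ :=
  ∑ k ∈ Finset.range n, ξ (runState step s0 x k) (x k)

theorem noiseSum_congr {V S : Type*} (step : S → V → S) (s0 : S) (ξ : S → V → ℝ)
    (x y : ℕ → V) (n : ℕ)
    (h : ∀ k < n, x k = y k) : noiseSum step s0 ξ x n = noiseSum step s0 ξ y n := by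
  unfold noiseSum
  refine Finset.sum_congr rfl fun k hk => ?_
  have hk := Finset.mem_range.1 hk
  rw [runState_congr step s0 x y k fun j hj => h j (by omega), h k hk]

theorem noiseSum_snoc {V S : Type*} (step : S → V → S) (s0 : S) (ξ : S → V → ℝ) (v0 : V)
    {n : ℕ} (f : Fin n → V) (v : V) :
    noiseSum step s0 ξ (extSeq v0 (Fin.snoc (α := fun _ => V) f v)) (n + 1) =
      noiseSum step s0 ξ (extSeq v0 f) n + ξ (runState step s0 (extSeq v0 f) n) v := by
  have hc : ∀ k < n, extSeq v0 (Fin.snoc (α := fun _ => V) f v) k = extSeq v0 f k := by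
    intro k hk
    simp [extSeq, hk, Nat.lt_succ_of_lt hk, Fin.snoc]
  have hl : extSeq v0 (Fin.snoc (α := fun _ => V) f v) n = v := by
    simp [extSeq, Fin.snoc]
  rw [show ∀ x, noiseSum step s0 ξ x (n + 1) = noiseSum step s0 ξ x n +
    ξ (runState step s0 x n) (x n) from fun x => Finset.sum_range_succ _ _]
  rw [noiseSum_congr step s0 ξ _ _ n hc, runState_congr step s0 _ _ n hc, hl]

theorem sum_snoc {V : Type*} [Fintype V] (n : ℕ) (g : (Fin (n + 1) → V) → ℝ) :
    ∑ f : Fin (n + 1) → V, g f =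
      ∑ f : Fin n → V, ∑ v : V, g (Fin.snoc (α := fun _ => V) f v) := by
  rw [← (Fin.snocEquiv (fun _ : Fin (n + 1) => V)).sum_comp, Fintype.sum_prod_type, Finset.sum_comm]
  rfl

theorem point_two {V : Type*} [Fintype V] (s C : ℝ) (u : V → ℝ) (hu : ∀ v, |u v| ≤ C)
    (h0 : ∑ v, u v = 0) : ∑ v, (s + u v) ^ 2 ≤ Fintype.card V * (s ^ 2 + C ^ 2) := by
  have : ∀ v, (s + u v) ^ 2 ≤ (s ^ 2 + C ^ 2) + 2 * s * u v := by
    intro v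
    have := sq_le_sq' (abs_le.1 (hu v)).1 (abs_le.1 (hu v)).2
    nlinarith
  refine (Finset.sum_le_sum fun v _ => this v).trans ?_
  rw [Finset.sum_add_distrib, ← Finset.mul_sum, h0]
  simp [mul_add]

theorem point_four {V : Type*} [Fintype V] (s C : ℝ) (u : V → ℝ) (hu : ∀ v, |u v| ≤ C)
    (h0 : ∑ v, u v = 0) :
    ∑ v, (s + u v) ^ 4 ≤ Fintype.card V * (s ^ 4 + 8 * C ^ 2 * s ^ 2 + 3 * C ^ 4) := by
  have : ∀ v, (s + u v) ^ 4 ≤ (s ^ 4 + 8 * C ^ 2 * s ^ 2 + 3 * C ^ 4) + 4 * s ^ 3 * u v := by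
    intro v
    have h1 := sq_le_sq' (abs_le.1 (hu v)).1 (abs_le.1 (hu v)).2
    have h2 : (u v ^ 2) ^ 2 ≤ (C ^ 2) ^ 2 := pow_le_pow_left₀ (sq_nonneg _) h1 2
    have h3 : s ^ 2 * u v ^ 2 ≤ s ^ 2 * C ^ 2 := mul_le_mul_of_nonneg_left h1 (sq_nonneg _)
    have h4 : 0 ≤ u v ^ 2 * (s - u v) ^ 2 := by positivity
    nlinarith
  refine (Finset.sum_le_sum fun v _ => this v).trans ?_
  rw [Finset.sum_add_distrib, ← Finset.mul_sum, h0]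
  simp [mul_add]

theorem moment_two {V S : Type*} [Fintype V] (step : S → V → S) (s0 : S) (ξ : S → V → ℝ) (v0 : V)
    (C : ℝ) (hC : ∀ s v, |ξ s v| ≤ C) (h0 : ∀ s, ∑ v, ξ s v = 0) (n : ℕ) :
    ∑ f : Fin n → V, (noiseSum step s0 ξ (extSeq v0 f) n) ^ 2 ≤
      (Fintype.card V : ℝ) ^ n * (C ^ 2 * n) := by
  induction n with
  | zero => simp [noiseSum]
  | succ n ih =>
    rw [sum_snoc]
    simp only [noiseSum_snoc]
    refine (Finset.sum_le_sum fun f _ => point_two _ C _ (hC _) (h0 _)).trans ?_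
    rw [← Finset.mul_sum, Finset.sum_add_distrib]
    simp only [Finset.sum_const, Finset.card_univ, Fintype.card_fun, Fintype.card_fin,
      nsmul_eq_mul, Nat.cast_pow, Nat.cast_add, Nat.cast_one]
    have hk : (0 : ℝ) ≤ Fintype.card V := Nat.cast_nonneg _
    calc _ ≤ (Fintype.card V : ℝ) * ((Fintype.card V : ℝ) ^ n * (C ^ 2 * n) +
          (Fintype.card V : ℝ) ^ n * C ^ 2) := by gcongr
      _ = _ := by ring

theorem moment_four {V S : Type*} [Fintype V] (step : S → V → S) (s0 : S) (ξ : S → V → ℝ) (v0 : V)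
    (C : ℝ) (hC : ∀ s v, |ξ s v| ≤ C) (h0 : ∀ s, ∑ v, ξ s v = 0) (n : ℕ) :
    ∑ f : Fin n → V, (noiseSum step s0 ξ (extSeq v0 f) n) ^ 4 ≤
      (Fintype.card V : ℝ) ^ n * (4 * C ^ 4 * n ^ 2) := by
  induction n with
  | zero => simp [noiseSum]
  | succ n ih =>
    rw [sum_snoc]
    simp only [noiseSum_snoc]
    refine (Finset.sum_le_sum fun f _ => point_four _ C _ (hC _) (h0 _)).trans ?_
    rw [← Finset.mul_sum, Finset.sum_add_distrib, Finset.sum_add_distrib, ← Finset.mul_sum]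
    simp only [Finset.sum_const, Finset.card_univ, Fintype.card_fun, Fintype.card_fin,
      nsmul_eq_mul, Nat.cast_pow, Nat.cast_add, Nat.cast_one]
    have hk : (0 : ℝ) ≤ Fintype.card V := Nat.cast_nonneg _
    have h2 := moment_two step s0 ξ v0 C hC h0 n
    have h4 : 0 ≤ (Fintype.card V : ℝ) ^ (n + 1) * C ^ 4 := by positivity
    calc _ ≤ (Fintype.card V : ℝ) * ((Fintype.card V : ℝ) ^ n * (4 * C ^ 4 * n ^ 2) +
          8 * C ^ 2 * ((Fintype.card V : ℝ) ^ n * (C ^ 2 * n)) +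
          (Fintype.card V : ℝ) ^ n * (3 * C ^ 4)) := by gcongr
      _ = (Fintype.card V : ℝ) ^ (n + 1) * (4 * C ^ 4 * (n + 1) ^ 2)
          - (Fintype.card V : ℝ) ^ (n + 1) * C ^ 4 := by ring
      _ ≤ _ := by linarith

/-- Strong law of large numbers for the noise. -/
theorem noise_slln {V S : Type*} [Fintype V] {Ω : Type*} [MeasurableSpace Ω]
    (μ : Measure Ω) [IsProbabilityMeasure μ] (X : ℕ → Ω → V) (hX : IsUniformIID μ X) (v0 : V)
    (step : S → V → S) (s0 : S) (ξ : S → V → ℝ)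
    (C : ℝ) (hC : ∀ s v, |ξ s v| ≤ C) (h0 : ∀ s, ∑ v, ξ s v = 0) :
    ∀ᵐ ω ∂μ, Tendsto (fun n : ℕ => noiseSum step s0 ξ (fun k => X k ω) n / n) atTop (𝓝 0) := by
  have hcard : (0 : ℝ) < Fintype.card V := by
    exact_mod_cast Fintype.card_pos_iff.2 ⟨v0⟩
  set G : ℕ → Ω → ℝ := fun n ω => (noiseSum step s0 ξ (fun k => X k ω) n / n) ^ 4 with hG
  have key : ∀ n, Integrable (G n) μ ∧ ∫ ω, G n ω ∂μ ≤ 4 * C ^ 4 * (1 / (n : ℝ) ^ 2) := by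
    intro n
    obtain ⟨h1, h2⟩ := integral_prefix μ X hX v0 n
      (fun x => (noiseSum step s0 ξ x n / n) ^ 4) (fun x y hxy => by
        simp only [noiseSum_congr step s0 ξ x y n hxy])
    refine ⟨h1, ?_⟩
    simp only [hG]
    rw [h2]
    simp only [div_pow]
    rw [← Finset.sum_div]
    have h4 := moment_four step s0 ξ v0 C hC h0 n
    rcases Nat.eq_zero_or_pos n with rfl | hn
    · simp [noiseSum]
    have hn' : (0 : ℝ) < n := by exact_mod_cast hn
    calc _ ≤ ((Fintype.card V : ℝ)⁻¹) ^ n *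
          ((Fintype.card V : ℝ) ^ n * (4 * C ^ 4 * n ^ 2) / n ^ 4) := by gcongr
      _ = _ := by
        rw [inv_pow]; field_simp
  have hnn : ∀ n ω, 0 ≤ G n ω := fun n ω => by simp only [hG]; positivity
  have hsum : Summable fun n : ℕ => 4 * C ^ 4 * (1 / (n : ℝ) ^ 2) :=
    (Real.summable_one_div_nat_pow.2 (by norm_num)).mul_left _
  have hlin : ∫⁻ ω, ∑' n, ENNReal.ofReal (G n ω) ∂μ ≠ ⊤ := by
    rw [lintegral_tsum fun n => (key n).1.aemeasurable.ennreal_ofReal]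
    have : ∀ n, ∫⁻ ω, ENNReal.ofReal (G n ω) ∂μ ≤
        ENNReal.ofReal (4 * C ^ 4 * (1 / (n : ℝ) ^ 2)) := by
      intro n
      rw [← ofReal_integral_eq_lintegral_ofReal (key n).1 (ae_of_all _ (hnn n))]
      exact ENNReal.ofReal_le_ofReal (key n).2
    refine ne_top_of_le_ne_top ?_ (ENNReal.tsum_le_tsum this)
    exact hsum.tsum_ofReal_ne_top
  have hae := ae_lt_top' (AEMeasurable.tsum
    fun n => (key n).1.aemeasurable.ennreal_ofReal) hlin
  filter_upwards [hae] with ω hω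
  have h1 := ENNReal.tendsto_atTop_zero_of_tsum_ne_top hω.ne
  have h2 : Tendsto (fun n => G n ω) atTop (𝓝 0) := by
    have := (ENNReal.tendsto_toReal ENNReal.zero_ne_top).comp h1
    simp only [ENNReal.toReal_zero] at this
    refine this.congr fun n => ?_
    simp [hnn n ω]
  have h3 : Tendsto (fun n => Real.sqrt (Real.sqrt (G n ω))) atTop (𝓝 0) := by
    have := (Real.continuous_sqrt.tendsto _).comp ((Real.continuous_sqrt.tendsto _).comp h2)
    simpa [Function.comp_def] using this
  rw [tendsto_zero_iff_abs_tendsto_zero]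
  refine h3.congr fun n => ?_
  simp only [hG, Function.comp]
  rw [show ∀ a : ℝ, a ^ 4 = (a ^ 2) ^ 2 from fun a => by ring, Real.sqrt_sq (sq_nonneg _),
    Real.sqrt_sq_eq_abs]

/-- State of the top of the heap: maximal height, gap, leading block. -/
def HInv {V J : Type*} (blk : V → Option J) (h : V → ℕ) (s : ℕ × ℕ × J) : Prop :=
  (∀ x, h x ≤ s.1) ∧ (s.2.1 = 0 → ∀ j, ∃ x, blk x ≠ some j ∧ h x = s.1) ∧
  (0 < s.2.1 → (∃ x, blk x = some s.2.2 ∧ h x = s.1) ∧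
    (∀ y, blk y ≠ some s.2.2 → h y + s.2.1 ≤ s.1) ∧
    ∃ y, blk y ≠ some s.2.2 ∧ h y + s.2.1 = s.1)

/-- Transition of the state, according to the block of the chosen vertex. -/
noncomputable def bStep {J : Type*} (opp : J → J) (s : ℕ × ℕ × J) : Option J → ℕ × ℕ × J
  | none => (s.1 + 1, 0, s.2.2)
  | some c =>
    if s.2.1 = 0 then (s.1 + 1, 1, c)
    else if c = s.2.2 then (s.1 + 1, s.2.1 + 1, s.2.2)
    else if c = opp s.2.2 then (s.1, s.2.1 - 1, s.2.2)
    else (s.1 + 1, 1, c)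

theorem HInv_step {V J : Type*} (blk : V → Option J) (opp : J → J)
    (hne : ∀ j, opp j ≠ j) (hoo : ∀ j, opp (opp j) = j)
    (h h' : V → ℕ) (v : V) (s : ℕ × ℕ × J)
    (hoff : ∀ x, x ≠ v → h' x = h x)
    (hge : ∀ y, (∀ j, blk v = some j → blk y ≠ some (opp j)) → h y + 1 ≤ h' v)
    (hex : ∃ y, (∀ j, blk v = some j → blk y ≠ some (opp j)) ∧ h' v = h y + 1)
    (hI : HInv blk h s) : HInv blk h' (bStep opp s (blk v)) := by
  obtain ⟨M, D, a⟩ := s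
  obtain ⟨hle, h0, h1⟩ := hI
  obtain ⟨z, hz, hzv⟩ := hex
  simp only at hle h0 h1
  have hvv : h v + 1 ≤ h' v := hge v (by
    intro j hj hj'
    rw [hj] at hj'
    exact hne j (Option.some.inj hj').symm)
  have hmono : ∀ x, h x ≤ h' x := by
    intro x
    by_cases hx : x = v
    · subst hx; omega
    · rw [hoff x hx]
  -- a vertex of maximal height that is seen forces a new record
  have hrec : ∀ x, (∀ j, blk v = some j → blk x ≠ some (opp j)) → h x = M → h' v = M + 1 := by
    intro x hx hxM
    have := hge x hx
    have := hle z
    omega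
  have hle' : h' v ≤ M + 1 := by have := hle z; omega
  have hall : ∀ x, h' x ≤ M + 1 := by
    intro x
    by_cases hx : x = v
    · subst hx; exact hle'
    · rw [hoff x hx]; have := hle x; omega
  -- the block created by a hfresh record
  have hfresh : ∀ c, blk v = some c → h' v = M + 1 → (∃ y, blk y ≠ some c ∧ h y = M) →
      HInv blk h' (M + 1, 1, c) := by
    rintro c hc hv ⟨y, hy, hyM⟩
    refine ⟨hall, by simp, fun _ => ⟨⟨v, hc, hv⟩, ?_, ⟨y, hy, ?_⟩⟩⟩
    · intro w hw
      have : w ≠ v := by rintro rfl; exact hw hc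
      simp only
      rw [hoff w this]; have := hle w; omega
    · have : y ≠ v := by rintro rfl; exact hy hc
      simp only
      rw [hoff y this]; omega
  cases hb : blk v with
  | none =>
    have hv : h' v = M + 1 := by
      rcases Nat.eq_zero_or_pos D with hD | hD
      · obtain ⟨x, _, hx⟩ := h0 hD a
        exact hrec x (by simp [hb]) hx
      · obtain ⟨x, _, hx⟩ := (h1 hD).1
        exact hrec x (by simp [hb]) hx
    refine ⟨hall, fun _ j => ⟨v, by simp [hb], hv⟩, by simp [bStep]⟩
  | some c =>
    simp only [bStep]
    split_ifs with hD hc hc'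
    · obtain ⟨x, hx, hxM⟩ := h0 hD (opp c)
      have hv := hrec x (by
        intro j hj; rw [hb] at hj; rw [← Option.some.inj hj]; exact hx) hxM
      exact hfresh c hb hv (h0 hD c)
    · -- same block
      subst hc
      obtain ⟨⟨x, hx, hxM⟩, hlow, ⟨y, hy, hyM⟩⟩ := h1 (Nat.pos_of_ne_zero hD)
      have hv := hrec x (by
        intro j hj; rw [hb] at hj; rw [← Option.some.inj hj, hx]
        intro h; exact hne c (Option.some.inj h).symm) hxM
      refine ⟨hall, by simp, fun _ => ⟨⟨v, hb, hv⟩, ?_, ⟨y, hy, ?_⟩⟩⟩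
      · intro w hw
        have : w ≠ v := by rintro rfl; exact hw hb
        simp only
        rw [hoff w this]; have := hlow w hw; omega
      · have : y ≠ v := by rintro rfl; exact hy hb
        simp only
        rw [hoff y this]; omega
    · -- opposite block
      obtain ⟨⟨x, hx, hxM⟩, hlow, ⟨y, hy, hyM⟩⟩ := h1 (Nat.pos_of_ne_zero hD)
      have hseen : ∀ w, blk w ≠ some a → (∀ j, blk v = some j → blk w ≠ some (opp j)) := by
        intro w hw j hj
        rw [hb] at hj; rw [← Option.some.inj hj, hc', hoo]; exact hw
      have hza : blk z ≠ some a := by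
        have := hz c hb
        rwa [hc', hoo] at this
      have e1 := hge y (hseen y hy)
      have e2 := hlow z hza
      have hv : h' v + (D - 1) = M := by omega
      have hva : blk v ≠ some a := by
        rw [hb]; intro h; exact hc (Option.some.inj h)
      have hxv : x ≠ v := by rintro rfl; exact hva hx
      refine ⟨?_, ?_, fun _ => ⟨⟨x, hx, by simp only; rw [hoff x hxv, hxM]⟩, ?_, ⟨v, hva, hv⟩⟩⟩
      · intro w
        by_cases hw : w = v
        · subst hw; simp only; omega
        · rw [hoff w hw]; exact hle w
      · intro hd j
        simp only at hd ⊢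
        by_cases hj : j = a
        · exact ⟨v, by rw [hj]; exact hva, by omega⟩
        · exact ⟨x, by rw [hx]; intro h; exact hj (Option.some.inj h).symm,
            by rw [hoff x hxv, hxM]⟩
      · intro w hw
        simp only at hw ⊢
        by_cases hwv : w = v
        · subst hwv; omega
        · rw [hoff w hwv]; have := hlow w hw; omega
    · -- another block
      obtain ⟨⟨x, hx, hxM⟩, hlow, ⟨y, hy, hyM⟩⟩ := h1 (Nat.pos_of_ne_zero hD)
      have hv := hrec x (by
        intro j hj; rw [hb] at hj; rw [← Option.some.inj hj, hx]
        intro h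
        apply hc'
        rw [Option.some.inj h, hoo]) hxM
      exact hfresh c hb hv ⟨x, by rw [hx]; intro h; exact hc (Option.some.inj h).symm, hxM⟩

theorem height_off {V : Type*} [Fintype V] (G : SimpleGraph V) (h0 : V → ℕ) (X : ℕ → V)
    (n : ℕ) (x : V) (hx : x ≠ X n) : heightProcess G h0 X (n + 1) x = heightProcess G h0 X n x := by
  simp [heightProcess, hx]

theorem height_ge {V : Type*} [Fintype V] (G : SimpleGraph V) (h0 : V → ℕ) (X : ℕ → V)
    (n : ℕ) (y : V) (hy : y = X n ∨ G.Adj (X n) y) :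
    heightProcess G h0 X n y + 1 ≤ heightProcess G h0 X (n + 1) (X n) := by
  have := Finset.le_sup (f := fun y =>
          if y = X n ∨ G.Adj (X n) y then heightProcess G h0 X n y else 0) (Finset.mem_univ y)
  simp only [heightProcess, if_true]
  simp only [if_pos hy] at this
  omega

theorem height_ex {V : Type*} [Fintype V] (G : SimpleGraph V) (h0 : V → ℕ) (X : ℕ → V)
    (n : ℕ) : ∃ y, (y = X n ∨ G.Adj (X n) y) ∧
    heightProcess G h0 X (n + 1) (X n) = heightProcess G h0 X n y + 1 := by
  obtain ⟨y, -, hy⟩ := Finset.exists_mem_eq_sup (Finset.univ : Finset V) ⟨X n, Finset.mem_univ _⟩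
    (fun y => if y = X n ∨ G.Adj (X n) y then heightProcess G h0 X n y else 0)
  by_cases hc : y = X n ∨ G.Adj (X n) y
  · refine ⟨y, hc, ?_⟩
    simp only [heightProcess, if_true]
    rw [hy, if_pos hc]; omega
  · refine ⟨X n, Or.inl rfl, ?_⟩
    have := Finset.le_sup (f := fun y =>
          if y = X n ∨ G.Adj (X n) y then heightProcess G h0 X n y else 0) (Finset.mem_univ (X n))
    simp only [heightProcess, if_true]
    rw [hy, if_neg hc] at this ⊢
    simp at this
    omega

theorem height_mono {V : Type*} [Fintype V] (G : SimpleGraph V) (h0 : V → ℕ) (X : ℕ → V) (x : V) :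
    Monotone fun n => heightProcess G h0 X n x := by
  refine monotone_nat_of_le_succ fun n => ?_
  by_cases hx : x = X n
  · have := height_ge G h0 X n x (Or.inl hx)
    rw [← hx] at this
    omega
  · rw [height_off G h0 X n x hx]

/-- If `x` sees `y` and is chosen between `s` and `t` then it overtakes `y`. -/
theorem height_window {V : Type*} [Fintype V] (G : SimpleGraph V) (h0 : V → ℕ) (X : ℕ → V)
    (x y : V) (hy : y = x ∨ G.Adj x y) (s t : ℕ) (h : ∃ k, s ≤ k ∧ k < t ∧ X k = x) :
    heightProcess G h0 X s y ≤ heightProcess G h0 X t x := by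
  obtain ⟨k, hs, ht, rfl⟩ := h
  have e1 : heightProcess G h0 X s y ≤ heightProcess G h0 X k y := height_mono G h0 X y hs
  have e2 := height_ge G h0 X k y hy
  have e3 : heightProcess G h0 X (k + 1) (X k) ≤ heightProcess G h0 X t (X k) :=
    height_mono G h0 X (X k) ht
  omega

/-- Block of a vertex of the clone graph. -/
def cblk {N n m : ℕ} : ((Fin n × Fin m) ⊕ Fin N) → Option (Fin m)
  | Sum.inl p => some p.2
  | Sum.inr _ => none

/-- The opposite block. -/
def copp {m : ℕ} (j : Fin m) : Fin m := ⟨((j : ℕ) + m / 2) % m, Nat.mod_lt _ j.pos⟩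

theorem copp_val {m : ℕ} (hme : Even m) (j : Fin m) :
    (copp j : ℕ) = if (j : ℕ) < m / 2 then j + m / 2 else j - m / 2 := by
  obtain ⟨k, rfl⟩ := hme
  have hj := j.2
  simp only [copp]
  split_ifs with h
  · rw [Nat.mod_eq_of_lt (by omega)]
  · rw [Nat.mod_eq_sub_mod (by omega), Nat.mod_eq_of_lt (by omega)]; omega

theorem copp_ne {m : ℕ} (hme : Even m) (j : Fin m) : copp j ≠ j := by
  intro h
  have := congrArg Fin.val h
  rw [copp_val hme] at this
  have hj := j.2
  obtain ⟨k, rfl⟩ := hme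
  split_ifs at this <;> omega

theorem copp_copp {m : ℕ} (hme : Even m) (j : Fin m) : copp (copp j) = j := by
  apply Fin.ext
  rw [copp_val hme, copp_val hme]
  have hj := j.2
  obtain ⟨k, rfl⟩ := hme
  split_ifs <;> omega

theorem clone_nb {N n m : ℕ} (hme : Even m) (x y : (Fin n × Fin m) ⊕ Fin N) :
    (y = x ∨ (cloneGraph N n m).Adj x y) ↔ ∀ j, cblk x = some j → cblk y ≠ some (copp j) := by
  have hval : ∀ a b : Fin m, ((b : ℕ) % m = ((a : ℕ) + m / 2) % m) ↔ b = copp a := by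
    intro a b
    rw [Nat.mod_eq_of_lt b.2, Fin.ext_iff]; rfl
  have hsymm : ∀ a b : Fin m, a = copp b ↔ b = copp a := by
    intro a b
    constructor <;> rintro rfl <;> rw [copp_copp hme]
  rcases x with ⟨i, a⟩ | x <;> rcases y with ⟨i', b⟩ | y
  · simp only [cloneGraph, SimpleGraph.fromRel_adj, hval, cblk, hsymm a b, or_self]
    constructor
    · rintro (h | h) j hj hj'
      · simp only [Sum.inl.injEq, Prod.mk.injEq] at h
        rw [Option.some.injEq] at hj hj'
        apply copp_ne hme a
        rw [hj, ← hj', h.2, hj]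
      · rw [Option.some.injEq] at hj hj'
        exact h.2 (by rw [hj, hj'])
    · intro h
      by_cases he : (Sum.inl (i', b) : (Fin n × Fin m) ⊕ Fin N) = Sum.inl (i, a)
      · exact Or.inl he
      · exact Or.inr ⟨fun h' => he h'.symm, fun h' => h a rfl (by rw [h'])⟩
  · simp [cloneGraph, cblk]
  · simp [cloneGraph, cblk]
  · simp only [cloneGraph, SimpleGraph.fromRel_adj, cblk]
    by_cases he : y = x
    · simp [he]
    · simp [he]
      exact fun h => he h.symm

theorem clone_two {N n m : ℕ} (hn : 1 ≤ n) (hm : 2 ≤ m) (hme : Even m) (hN : m = 2 → 1 ≤ N)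
    (z x : (Fin n × Fin m) ⊕ Fin N) :
    ∃ y, (z = y ∨ (cloneGraph N n m).Adj y z) ∧ (y = x ∨ (cloneGraph N n m).Adj x y) := by
  simp only [clone_nb hme]
  by_cases h2 : m = 2
  · refine ⟨Sum.inr ⟨0, hN h2⟩, ?_, ?_⟩ <;> simp [cblk]
  · rcases hz : cblk z with _ | a
    · exact ⟨z, by simp [hz], by simp [hz]⟩
    · rcases hx : cblk x with _ | c
      · refine ⟨z, ?_, by simp⟩
        simp only [hz, Option.some.injEq]
        rintro j rfl h
        exact copp_ne hme _ (Option.some.inj h).symm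
      · have : ∃ d : Fin m, d ∉ ({copp a, copp c} : Finset (Fin m)) := by
          by_contra! hall
          have h1 : (Finset.univ : Finset (Fin m)) ⊆ {copp a, copp c} := fun d _ => hall d
          have h3 := Finset.card_le_card h1
          have h4 := Finset.card_le_two (a := copp a) (b := copp c)
          rw [Finset.card_fin] at h3
          omega
        obtain ⟨d, hd⟩ := this
        simp only [Finset.mem_insert, Finset.mem_singleton, not_or] at hd
        refine ⟨Sum.inl (⟨0, hn⟩, d), ?_, ?_⟩
        · simp only [cblk, Option.some.injEq]
          rintro j rfl h
          exact hd.1 (by rw [Option.some.inj h, copp_copp hme])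
        · simp only [cblk, Option.some.injEq]
          rintro j rfl h
          exact hd.2 (Option.some.inj h)

/-- The vertex-driven transition. -/
noncomputable def vStep {N n m : ℕ} (s : ℕ × ℕ × Fin m) (v : (Fin n × Fin m) ⊕ Fin N) :
    ℕ × ℕ × Fin m := bStep copp s (cblk v)

theorem HInv_run {N n m : ℕ} (hn : 1 ≤ n) (hme : Even m) (a0 : Fin m)
    (X : ℕ → (Fin n × Fin m) ⊕ Fin N) (k : ℕ) :
    HInv cblk (heightProcess (cloneGraph N n m) (fun _ => 0) X k)
      (runState vStep (0, 0, a0) X k) := by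
  induction k with
  | zero =>
    refine ⟨fun x => le_rfl, fun _ j => ⟨Sum.inl (⟨0, hn⟩, copp j), ?_, rfl⟩, fun h => ?_⟩
    · simp only [cblk, ne_eq, Option.some.injEq]; exact copp_ne hme j
    · simp [runState] at h
  | succ k ih =>
    refine HInv_step cblk copp (copp_ne hme) (copp_copp hme) _ _ (X k) _
      (fun x hx => height_off _ _ _ _ _ hx) ?_ ?_ ih
    · intro y hy
      exact height_ge _ _ _ _ _ ((clone_nb hme _ _).2 hy)
    · obtain ⟨y, hy, h⟩ := height_ex (cloneGraph N n m) (fun _ => 0) X k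
      exact ⟨y, (clone_nb hme _ _).1 hy, h⟩

theorem HInv_sup {V J : Type*} [Fintype V] [Nonempty J] (blk : V → Option J) (h : V → ℕ)
    (s : ℕ × ℕ × J) (hI : HInv blk h s) : (∀ x, h x ≤ s.1) ∧ ∃ x, h x = s.1 := by
  refine ⟨hI.1, ?_⟩
  rcases Nat.eq_zero_or_pos s.2.1 with hD | hD
  · obtain ⟨x, -, hx⟩ := hI.2.1 hD (Classical.arbitrary J)
    exact ⟨x, hx⟩
  · obtain ⟨x, -, hx⟩ := (hI.2.2 hD).1
    exact ⟨x, hx⟩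

/-- The potential solving the Poisson equation. -/
noncomputable def pot {J : Type*} (b r : ℝ) (s : ℕ × ℕ × J) : ℝ := (s.1 : ℝ) + b * r ^ s.2.1

theorem sum_clone {N n m : ℕ} (F : Option (Fin m) → ℝ) :
    ∑ v : (Fin n × Fin m) ⊕ Fin N, F (cblk v) = n * ∑ j : Fin m, F (some j) + N * F none := by
  rw [Fintype.sum_sum_type, Fintype.sum_prod_type]
  simp [cblk]

theorem sum_three {m : ℕ} (a c : Fin m) (hac : c ≠ a) (x y z : ℝ) :
    ∑ j : Fin m, (if j = a then x else if j = c then y else z) = x + y + (m - 2) * z := by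
  have : ∀ j : Fin m, (if j = a then x else if j = c then y else z) =
      z + ((if j = a then x - z else 0) + (if j = c then y - z else 0)) := by
    intro j
    by_cases h : j = a
    · subst h; simp [hac.symm]
    · by_cases h' : j = c <;> simp [h, h']
      subst h'; simp [hac]
  simp only [this, Finset.sum_add_distrib, Finset.sum_ite_eq', Finset.mem_univ, if_true]
  simp
  ring

theorem pot_sum {N n m : ℕ} (hme : Even m) (b r g : ℝ)
    (E0 : (N + n * m : ℝ) + n * m * (b * r) + N * b - (N + n * m) * b = (N + n * m) * g)
    (E1 : (N + n * m : ℝ) - n + n * (m - 2) * (b * r) + N * b = (N + n * m) * g)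
    (E2 : (n : ℝ) * (1 + r ^ 2) = (N + n * m) * r) (s : ℕ × ℕ × Fin m) :
    ∑ v : (Fin n × Fin m) ⊕ Fin N, (pot b r (vStep s v) - pot b r s - g) = 0 := by
  obtain ⟨M, D, a⟩ := s
  have := sum_clone (N := N) (n := n) (fun o : Option (Fin m) =>
    pot b r (bStep copp (M, D, a) o) - pot b r (M, D, a) - g)
  simp only [vStep]
  rw [this]
  rcases D with _ | d
  · simp [bStep, pot]
    linarith
  · have hj : ∀ j : Fin m, pot b r (bStep copp (M, d + 1, a) (some j)) - pot b r (M, d + 1, a) - g =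
      if j = a then 1 + b * r ^ (d + 2) - b * r ^ (d + 1) - g
        else if j = copp a then b * r ^ d - b * r ^ (d + 1) - g
        else 1 + b * r - b * r ^ (d + 1) - g := by
      intro j
      simp only [bStep, pot]
      by_cases h : j = a
      · simp [h]; ring
      · by_cases h' : j = copp a
        · simp [h', copp_ne hme]
        · simp [h, h']; ring
    rw [Finset.sum_congr rfl fun j _ => hj j, sum_three a (copp a) (copp_ne hme a)]
    simp only [bStep, pot]
    push_cast
    linear_combination E1 + b * r ^ d * E2

theorem pot_bound {N n m : ℕ} (b r g : ℝ) (hr0 : 0 ≤ r) (hr1 : r ≤ 1) (s : ℕ × ℕ × Fin m)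
    (v : (Fin n × Fin m) ⊕ Fin N) :
    |pot b r (vStep s v) - pot b r s - g| ≤ 1 + 2 * |b| + |g| := by
  have hb : ∀ k : ℕ, |b * r ^ k| ≤ |b| := by
    intro k
    rw [abs_mul, abs_of_nonneg (pow_nonneg hr0 k)]
    exact mul_le_of_le_one_right (abs_nonneg _) (pow_le_one₀ hr0 hr1)
  have hM : |((vStep s v).1 : ℝ) - s.1| ≤ 1 := by
    simp only [vStep]
    cases cblk v with
    | none => simp [bStep]
    | some c => simp only [bStep]; split_ifs <;> simp
  have h1 := hb (vStep s v).2.1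
  have h2 := hb s.2.1
  have : pot b r (vStep s v) - pot b r s - g =
    (((vStep s v).1 : ℝ) - s.1) + b * r ^ (vStep s v).2.1 - b * r ^ s.2.1 - g := by
    simp only [pot]; ring
  rw [this]
  refine (abs_sub _ _).trans ?_
  refine (add_le_add_left ((abs_sub _ _).trans (add_le_add_left (abs_add_le _ _) _)) _).trans ?_
  linarith

theorem tendsto_scaled (a : ℕ → ℝ) (L ρ : ℝ) (hρ : 0 < ρ)
    (h : Tendsto (fun k : ℕ => a k / k) atTop (𝓝 L)) :
    Tendsto (fun k : ℕ => a ⌊ρ * k⌋₊ / k) atTop (𝓝 (ρ * L)) := by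
  have ht : Tendsto (fun k : ℕ => ⌊ρ * (k : ℝ)⌋₊) atTop atTop :=
    tendsto_nat_floor_atTop.comp (tendsto_natCast_atTop_atTop.const_mul_atTop hρ)
  have h1 := h.comp ht
  have h2 : Tendsto (fun k : ℕ => (⌊ρ * (k : ℝ)⌋₊ : ℝ) / k) atTop (𝓝 ρ) :=
    (tendsto_nat_floor_mul_div_atTop hρ.le).comp tendsto_natCast_atTop_atTop
  refine (h2.mul h1).congr' ?_
  filter_upwards [ht.eventually_gt_atTop 0] with k hk
  have : (⌊ρ * (k : ℝ)⌋₊ : ℝ) ≠ 0 := by exact_mod_cast hk.ne'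
  simp only [Function.comp]
  field_simp

theorem window {V : Type*} [DecidableEq V] (v : V) (x : ℕ → V) (c : ℝ) (hc : 0 < c)
    (h : Tendsto (fun k : ℕ => noiseSum (fun (_ : Unit) (_ : V) => ()) ()
      (fun _ w => (if w = v then 1 else 0) - c) x k / k) atTop (𝓝 0))
    (ρ : ℝ) (hρ : 0 < ρ) (hρ1 : ρ < 1) :
    ∀ᶠ k : ℕ in atTop, ∃ j, ⌊ρ * (k : ℝ)⌋₊ ≤ j ∧ j < k ∧ x j = v := by
  have h1 := h.sub (tendsto_scaled _ _ ρ hρ h)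
  have hpos : 0 - ρ * 0 > -(c * (1 - ρ)) := by
    have : 0 < c * (1 - ρ) := mul_pos hc (by linarith)
    linarith
  filter_upwards [h1.eventually (eventually_gt_nhds hpos), eventually_gt_atTop 0] with k hk hk0
  by_contra! hno
  have hk' : (0 : ℝ) < k := by exact_mod_cast hk0
  have hle : (⌊ρ * (k : ℝ)⌋₊ : ℝ) ≤ ρ * k := Nat.floor_le (by positivity)
  have hlt : ⌊ρ * (k : ℝ)⌋₊ ≤ k := by
    have : (⌊ρ * (k : ℝ)⌋₊ : ℝ) ≤ k := by nlinarith
    exact_mod_cast this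
  rw [← sub_div, noiseSum, noiseSum, Finset.sum_range_sub_sum_range hlt] at hk
  rw [Finset.sum_congr rfl (g := fun _ => -c)] at hk
  · rw [Finset.sum_const] at hk
    have hcard : ({i ∈ Finset.range k | ⌊ρ * (k : ℝ)⌋₊ ≤ i}).card = k - ⌊ρ * (k : ℝ)⌋₊ := by
      rw [← Nat.card_Ico]
      congr 1
      ext i; simp [and_comm]
    rw [hcard, nsmul_eq_mul, Nat.cast_sub hlt, lt_div_iff₀ hk'] at hk
    nlinarith
  · intro j hj
    simp only [Finset.mem_filter, Finset.mem_range] at hj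
    rw [if_neg (hno j hj.2 hj.1)]
    ring

/-- Scalar identities. -/
theorem scalars (N n m : ℝ) (hN : 0 ≤ N) (hn : 1 ≤ n) (hm : 2 ≤ m) (hK : 2 * n < N + n * m) :
    ∃ b r g : ℝ, 0 ≤ r ∧ r ≤ 1 ∧
    ((N + n * m : ℝ) + n * m * (b * r) + N * b - (N + n * m) * b = (N + n * m) * g) ∧
    ((N + n * m : ℝ) - n + n * (m - 2) * (b * r) + N * b = (N + n * m) * g) ∧
    ((n : ℝ) * (1 + r ^ 2) = (N + n * m) * r) ∧ 0 < (N + n * m) * g ∧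
    (N + n * m) * g = ((N + n * m : ℝ) -
        ((n : ℝ) ^ 2 * m / (N + n * m : ℝ)) *
          ((Real.sqrt (((N + n * m : ℝ) / (2 * n)) ^ 2 - 1) - (N + n * m : ℝ) / (2 * n) + 1)⁻¹ /
            ((Real.sqrt (((N + n * m : ℝ) / (2 * n)) ^ 2 - 1) - (N + n * m : ℝ) / (2 * n) + 1)⁻¹ +
              1 / (2 * ((N + n * m : ℝ) / (2 * n)))))) := by
  set K := N + n * m with hKdef
  have hn0 : 0 < n := by linarith
  have hK0 : 0 < K := by linarith
  set κ := K / (2 * n) with hκ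
  have hKκ : K = 2 * n * κ := by rw [hκ]; field_simp
  have hκ1 : 1 < κ := by rw [hκ, lt_div_iff₀ (by positivity)]; linarith
  set q := Real.sqrt (κ ^ 2 - 1) with hq
  have hq2 : q ^ 2 = κ ^ 2 - 1 := Real.sq_sqrt (by nlinarith)
  have hq0 : 0 ≤ q := Real.sqrt_nonneg _
  have hqle : q ≤ κ := by nlinarith
  have hqgt : κ - 1 < q := by nlinarith
  obtain ⟨r, hr⟩ : ∃ r, r = κ - q := ⟨_, rfl⟩
  have hrq : q = κ - r := by linarith
  have hr0 : 0 ≤ r := by linarith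
  have hr1 : 0 < 1 - r := by linarith
  have E2 : n * (1 + r ^ 2) = K * r := by
    rw [hKκ]
    have : r ^ 2 - 2 * κ * r + 1 = 0 := by rw [hr]; linear_combination hq2
    linear_combination n * this
  have hP : 0 < K + n * (1 - r) := by positivity
  have e0 : q - κ + 1 = 1 - r := by linarith
  rw [e0]
  obtain ⟨b, hb⟩ : ∃ b, b = n / ((1 - r) * (K + n * (1 - r))) := ⟨_, rfl⟩
  have hE0 : K + n * m * (b * r) + N * b - K * b =
      K * (1 - n * (n * m) / (K * (K + n * (1 - r)))) := by
    have hN' : N = K - n * m := by linarith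
    rw [hN', hb]
    field_simp
    ring
  have hb2 : b * (K - 2 * n * r) = n := by
    have : K - 2 * n * r = (1 - r) * (K + n * (1 - r)) := by linear_combination -E2
    rw [this, hb]
    field_simp
  refine ⟨b, r, 1 - n * (n * m) / (K * (K + n * (1 - r))), hr0, by linarith, hE0, ?_, E2, ?_, ?_⟩
  · linear_combination hE0 + hb2
  · have : n * (n * m) / (K + n * (1 - r)) < K := by
      rw [div_lt_iff₀ hP]
      have : n * m ≤ K := by linarith
      have : 0 < K * (n * (1 - r)) := by positivity
      nlinarith
    have e : K * (1 - n * (n * m) / (K * (K + n * (1 - r)))) =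
      K - n * (n * m) / (K + n * (1 - r)) := by field_simp
    rw [e]; linarith
  · have e : 1 / (2 * κ) = n / K := by rw [hκ]; field_simp
    rw [e]
    have : (1 - r)⁻¹ + n / K ≠ 0 := by positivity
    field_simp

theorem noise_telescope {S V : Type*} (step : S → V → S) (s0 : S) (Φ : S → ℝ) (g : ℝ)
    (x : ℕ → V) (k : ℕ) :
    noiseSum step s0 (fun s v => Φ (step s v) - Φ s - g) x k =
      Φ (runState step s0 x k) - Φ s0 - g * k := by
  induction k with
  | zero => simp [noiseSum, runState]
  | succ k ih =>
    unfold noiseSum at ih ⊢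
    rw [Finset.sum_range_succ, ih]
    simp only [runState]
    push_cast
    ring

theorem growth_max {S V : Type*} [Fintype V] (step : ℕ × ℕ × S → V → ℕ × ℕ × S)
    (s0 : ℕ × ℕ × S) (b r g : ℝ) (hr0 : 0 ≤ r) (hr1 : r ≤ 1) (x : ℕ → V)
    (h : Tendsto (fun k : ℕ => noiseSum step s0
      (fun s v => pot b r (step s v) - pot b r s - g) x k / k) atTop (𝓝 0)) :
    Tendsto (fun k : ℕ => ((runState step s0 x k).1 : ℝ) / k) atTop (𝓝 g) := by
  have hbd : Tendsto (fun k : ℕ => (pot b r s0 - b * r ^ (runState step s0 x k).2.1) / (k : ℝ))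
      atTop (𝓝 0) := by
    refine squeeze_zero_norm' (a := fun k : ℕ => (|pot b r s0| + |b|) / (k : ℝ)) ?_
      (tendsto_const_nhds.div_atTop tendsto_natCast_atTop_atTop)
    refine Eventually.of_forall fun k => ?_
    rw [norm_div, Real.norm_natCast, Real.norm_eq_abs]
    gcongr
    refine (abs_sub _ _).trans (add_le_add le_rfl ?_)
    rw [abs_mul, abs_of_nonneg (pow_nonneg hr0 _)]
    exact mul_le_of_le_one_right (abs_nonneg _) (pow_le_one₀ hr0 hr1)
  have h2 := (h.add hbd).add_const g
  simp only [zero_add] at h2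
  refine h2.congr' ?_
  filter_upwards [eventually_gt_atTop 0] with k hk
  have hk' : (k : ℝ) ≠ 0 := by exact_mod_cast hk.ne'
  rw [noise_telescope]
  simp only [pot]
  field_simp
  ring

theorem growth_min {V : Type*} [Fintype V] [DecidableEq V] [Nonempty V] (G : SimpleGraph V)
    (htwo : ∀ z x : V, ∃ y, (z = y ∨ G.Adj y z) ∧ (y = x ∨ G.Adj x y))
    (x : ℕ → V) (g c : ℝ) (hc : 0 < c)
    (hω : Tendsto (fun k : ℕ => (⨆ v, (heightProcess G (fun _ => 0) x k v : ℝ)) / k)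
      atTop (𝓝 g))
    (hω2 : ∀ v, Tendsto (fun k : ℕ => noiseSum (fun (_ : Unit) (_ : V) => ()) ()
      (fun _ w => (if w = v then 1 else 0) - c) x k / k) atTop (𝓝 0)) :
    Tendsto (fun k : ℕ => (⨅ v, (heightProcess G (fun _ => 0) x k v : ℝ)) / k)
      atTop (𝓝 g) := by
  have hle : ∀ k, (⨅ v, (heightProcess G (fun _ => 0) x k v : ℝ)) ≤ ⨆ v, (heightProcess G (fun _ => 0) x k v : ℝ) := fun k =>
    ciInf_le_ciSup (Set.finite_range _).bddBelow (Set.finite_range _).bddAbove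
  rw [tendsto_order]
  constructor
  · intro a ha
    obtain ⟨ρ, hρ0, hρ1, hρ⟩ : ∃ ρ : ℝ, 0 < ρ ∧ ρ < 1 ∧ a < ρ * (ρ * g) := by
      have hcont : Tendsto (fun ρ : ℝ => ρ * (ρ * g)) (𝓝[<] 1) (𝓝 (1 * (1 * g))) := by
        apply Tendsto.mono_left _ nhdsWithin_le_nhds
        exact Continuous.tendsto (by fun_prop) 1
      have h1 := hcont.eventually (eventually_gt_nhds (by simpa using ha : a < 1 * (1 * g)))
      have h2 : ∀ᶠ ρ : ℝ in 𝓝[<] 1, 0 < ρ :=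
        nhdsWithin_le_nhds (eventually_gt_nhds one_pos)
      have h3 : ∀ᶠ ρ : ℝ in 𝓝[<] 1, ρ < 1 := self_mem_nhdsWithin
      obtain ⟨ρ, h⟩ := (h1.and (h2.and h3)).exists
      exact ⟨ρ, h.2.1, h.2.2, h.1⟩
    have hw : ∀ᶠ k : ℕ in atTop, ∀ v, ∃ j, ⌊ρ * (k : ℝ)⌋₊ ≤ j ∧ j < k ∧ x j = v := by
      rw [eventually_all]
      intro v
      exact window v x c hc (hω2 v) ρ hρ0 hρ1
    have ht : Tendsto (fun k : ℕ => ⌊ρ * (k : ℝ)⌋₊) atTop atTop :=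
      tendsto_nat_floor_atTop.comp (tendsto_natCast_atTop_atTop.const_mul_atTop hρ0)
    have hlim1 := tendsto_scaled (fun k => ⨆ v, (heightProcess G (fun _ => 0) x k v : ℝ)) g ρ hρ0 hω
    have hlim := tendsto_scaled (fun k => ⨆ v, (heightProcess G (fun _ => 0) x ⌊ρ * (k : ℝ)⌋₊ v : ℝ)) (ρ * g) ρ hρ0 hlim1
    filter_upwards [hw, ht.eventually hw, hlim.eventually (eventually_gt_nhds hρ)]
      with k hk1 hk2 hk3
    refine lt_of_lt_of_le hk3 ?_
    gcongr
    refine ciSup_le fun z => le_ciInf fun v => ?_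
    obtain ⟨y, hy1, hy2⟩ := htwo z v
    have e1 := height_window _ (fun _ => 0) x y z hy1 _ _ (hk2 y)
    have e2 := height_window _ (fun _ => 0) x v y hy2 _ _ (hk1 v)
    exact_mod_cast e1.trans e2
  · intro a ha
    filter_upwards [hω.eventually (eventually_lt_nhds ha)] with k hk
    refine lt_of_le_of_lt ?_ hk
    gcongr
    exact hle k

theorem stmt1 (N n m : ℕ) (hn : 1 ≤ n) (hm : 2 ≤ m) (hme : Even m) (hN : m = 2 → 1 ≤ N) :
    IsGrowthRate (cloneGraph N n m)
      ((N + n * m : ℝ) -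
        ((n : ℝ) ^ 2 * m / (N + n * m : ℝ)) *
          ((Real.sqrt (((N + n * m : ℝ) / (2 * n)) ^ 2 - 1) - (N + n * m : ℝ) / (2 * n) + 1)⁻¹ /
            ((Real.sqrt (((N + n * m : ℝ) / (2 * n)) ^ 2 - 1) - (N + n * m : ℝ) / (2 * n) + 1)⁻¹ +
              1 / (2 * ((N + n * m : ℝ) / (2 * n)))))) := by
  have hn' : (1 : ℝ) ≤ n := by exact_mod_cast hn
  have hm' : (2 : ℝ) ≤ m := by exact_mod_cast hm
  have hNn : (0 : ℝ) ≤ N := Nat.cast_nonneg N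
  have hK : 2 * (n : ℝ) < N + n * m := by
    by_cases h2 : m = 2
    · have h1 : (1 : ℝ) ≤ N := by exact_mod_cast hN h2
      subst h2
      push_cast
      linarith
    · have h3 : (3 : ℝ) ≤ m := by
        have : 3 ≤ m := by omega
        exact_mod_cast this
      nlinarith
  obtain ⟨b, r, g, hr0, hr1, E0, E1, E2, hpos, hγ⟩ := scalars N n m hNn hn' hm' hK
  rw [← hγ]
  refine ⟨hpos, ?_⟩
  intro Ω _ μ _ X hX
  have hcard : (Fintype.card ((Fin n × Fin m) ⊕ Fin N) : ℝ) = N + n * m := by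
    simp; ring
  have hK0 : (0 : ℝ) < N + n * m := by linarith
  have hg : 0 < g := pos_of_mul_pos_right hpos hK0.le
  obtain ⟨a0⟩ : Nonempty (Fin m) := ⟨⟨0, by omega⟩⟩
  have : Nonempty (Fin m) := ⟨a0⟩
  have v0 : (Fin n × Fin m) ⊕ Fin N := Sum.inl (⟨0, hn⟩, a0)
  have : Nonempty ((Fin n × Fin m) ⊕ Fin N) := ⟨v0⟩
  set H : (ℕ → (Fin n × Fin m) ⊕ Fin N) → ℕ → ((Fin n × Fin m) ⊕ Fin N) → ℕ :=
    heightProcess (cloneGraph N n m) (fun _ => 0) with hH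
  have A1 := noise_slln μ X hX v0 vStep ((0, 0, a0) : ℕ × ℕ × Fin m)
    (fun s v => pot b r (vStep s v) - pot b r s - g) _ (pot_bound b r g hr0 hr1)
    (pot_sum hme b r g E0 E1 E2)
  have A2 : ∀ᵐ ω ∂μ, ∀ v, Tendsto (fun k : ℕ => noiseSum
      (fun (_ : Unit) (_ : (Fin n × Fin m) ⊕ Fin N) => ()) ()
      (fun _ w => (if w = v then 1 else 0) - (1 / (N + n * m : ℝ))) (fun k => X k ω) k / k)
      atTop (𝓝 0) := by
    rw [ae_all_iff]
    intro v
    refine noise_slln μ X hX v0 _ _ _ (1 + |1 / (N + n * m : ℝ)|) ?_ ?_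
    · intro _ w
      refine (abs_sub _ _).trans ?_
      gcongr
      split_ifs <;> simp
    · intro _
      rw [Finset.sum_sub_distrib, Finset.sum_ite_eq', Finset.sum_const, Finset.card_univ,
        nsmul_eq_mul, hcard]
      simp only [Finset.mem_univ, if_true]
      field_simp
      ring
  have hmaxeq : ∀ x k, (⨆ v, (H x k v : ℝ)) = ((runState vStep (0, 0, a0) x k).1 : ℝ) := by
    intro x k
    obtain ⟨h1, v, h2⟩ := HInv_sup _ _ _ (HInv_run (N := N) hn hme a0 x k)
    apply le_antisymm
    · exact ciSup_le fun v => by exact_mod_cast h1 v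
    · rw [← h2]
      exact le_ciSup (f := fun v => (H x k v : ℝ)) (Set.finite_range _).bddAbove v
  have hmax : ∀ᵐ ω ∂μ, Tendsto (fun k : ℕ =>
      (⨆ v, (H (fun j => X j ω) k v : ℝ)) / k) atTop (𝓝 g) := by
    filter_upwards [A1] with ω hω
    simp only [hmaxeq]
    exact growth_max vStep (0, 0, a0) b r g hr0 hr1 _ hω
  have hmin : ∀ᵐ ω ∂μ, Tendsto (fun k : ℕ =>
      (⨅ v, (H (fun j => X j ω) k v : ℝ)) / k) atTop (𝓝 g) := by
    filter_upwards [hmax, A2] with ω hω hω2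
    exact growth_min (cloneGraph N n m) (clone_two hn hm hme hN) (fun j => X j ω) g _
      (by positivity) hω hω2
  constructor
  · filter_upwards [hmax] with ω hω
    have := hω.const_mul (N + n * m : ℝ)
    refine this.congr fun k => ?_
    rw [hcard, mul_div_assoc]
  · filter_upwards [hmin] with ω hω
    have := hω.const_mul (N + n * m : ℝ)
    refine this.congr fun k => ?_
    rw [hcard, mul_div_assoc]
end

section
/- The star graph S_3 has growth rate γ(S_3) = 2 + 1/√5. -/
open MeasureTheory Filter Topology
open scoped ENNReal Classical

/-- The star graph `S n` on `n` vertices `0, 1, …, n−1`, with edges `{0, i}` for `1 ≤ i ≤ n−1`. -/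
def starGraph (n : ℕ) : SimpleGraph (Fin n) :=
  SimpleGraph.fromRel fun i _ => (i : ℕ) = 0

/-- One deposition step on the star with three vertices. -/
def sstep (v : Fin 3) (h : Fin 3 → ℕ) : Fin 3 → ℕ := fun x =>
  if x = v then
    1 + (if v = 0 then max (max (h 0) (h 1)) (h 2) else max (h 0) (h v))
  else h x

lemma hp_succ (X : ℕ → Fin 3) (n : ℕ) :
    heightProcess (starGraph 3) (fun _ => 0) X (n + 1)
      = sstep (X n) (heightProcess (starGraph 3) (fun _ => 0) X n) := by
  have huniv : (Finset.univ : Finset (Fin 3)) = {0, 1, 2} := by decide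
  funext x
  simp only [heightProcess, sstep]
  generalize heightProcess (starGraph 3) (fun _ => 0) X n = h
  by_cases hx : x = X n
  · rw [← hx]
    simp only [if_true]
    congr 1
    rw [huniv]
    fin_cases x <;> simp [starGraph, max_assoc]
  · simp [hx]

/-- The one-step averaging operator. -/
noncomputable def avg (f : (Fin 3 → ℕ) → ℝ) : (Fin 3 → ℕ) → ℝ := fun h =>
  (f (sstep 0 h) + f (sstep 1 h) + f (sstep 2 h)) / 3

lemma avg_nonneg {f : (Fin 3 → ℕ) → ℝ} (hf : ∀ h, 0 ≤ f h) : ∀ h, 0 ≤ avg f h := by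
  intro h
  have := hf (sstep 0 h); have := hf (sstep 1 h); have := hf (sstep 2 h)
  unfold avg; positivity

lemma avg_iter_nonneg {f : (Fin 3 → ℕ) → ℝ} (hf : ∀ h, 0 ≤ f h) (n : ℕ) :
    ∀ h, 0 ≤ avg^[n] f h := by
  induction n with
  | zero => simpa using hf
  | succ n ih => rw [Function.iterate_succ_apply']; exact avg_nonneg ih

lemma avg_mono {f g : (Fin 3 → ℕ) → ℝ} (hfg : ∀ h, f h ≤ g h) : ∀ h, avg f h ≤ avg g h := by
  intro h
  have := hfg (sstep 0 h); have := hfg (sstep 1 h); have := hfg (sstep 2 h)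
  unfold avg; linarith

lemma hp_congr {X Y : ℕ → Fin 3} {n : ℕ} (h : ∀ k < n, X k = Y k) :
    heightProcess (starGraph 3) (fun _ => 0) X n
      = heightProcess (starGraph 3) (fun _ => 0) Y n := by
  induction n with
  | zero => rfl
  | succ n ih =>
    rw [hp_succ, hp_succ, ih (fun k hk => h k (by omega)), h n (by omega)]

lemma cyl_lintegral {Ω : Type} [MeasurableSpace Ω] (μ : Measure Ω)
    (X : ℕ → Ω → Fin 3) (hX : IsUniformIID μ X) (f : (Fin 3 → ℕ) → ℝ) (hf : ∀ h, 0 ≤ f h)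
    (n : ℕ) : ∀ (m : ℕ) (w : ℕ → Fin 3),
    ∫⁻ ω in {ω | ∀ k < m, X k ω = w k},
      ENNReal.ofReal (f (heightProcess (starGraph 3) (fun _ => 0) (fun k => X k ω) (m + n))) ∂μ
    = (3 : ℝ≥0∞)⁻¹ ^ m *
      ENNReal.ofReal (avg^[n] f (heightProcess (starGraph 3) (fun _ => 0) w m)) := by
  have hmeas : ∀ (m : ℕ) (w : ℕ → Fin 3), MeasurableSet {ω | ∀ k < m, X k ω = w k} := by
    intro m w
    have : {ω | ∀ k < m, X k ω = w k} = ⋂ k, ⋂ (_ : k < m), {ω | X k ω = w k} := by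
      ext; simp
    rw [this]
    exact MeasurableSet.iInter fun k => MeasurableSet.iInter fun _ => hX.1 k _
  induction n with
  | zero =>
    intro m w
    have : ∫⁻ ω in {ω | ∀ k < m, X k ω = w k},
        ENNReal.ofReal (f (heightProcess (starGraph 3) (fun _ => 0) (fun k => X k ω) (m + 0))) ∂μ
      = ∫⁻ ω in {ω | ∀ k < m, X k ω = w k},
        ENNReal.ofReal (f (heightProcess (starGraph 3) (fun _ => 0) w m)) ∂μ := by
      apply setLIntegral_congr_fun (hmeas m w)
      intro ω hω
      simp only [add_zero]
      rw [hp_congr (Y := w) hω]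
    rw [this, setLIntegral_const, hX.2 m w, mul_comm]
    simp
  | succ n ih =>
    intro m w
    have hun : {ω | ∀ k < m, X k ω = w k}
        = ⋃ v : Fin 3, {ω | ∀ k < m + 1, X k ω = (Function.update w m v) k} := by
      ext ω
      simp only [Set.mem_setOf_eq, Set.mem_iUnion]
      constructor
      · intro h
        refine ⟨X m ω, fun k hk => ?_⟩
        by_cases hkm : k = m
        · subst hkm; simp
        · rw [Function.update_of_ne hkm]; exact h k (by omega)
      · rintro ⟨v, h⟩ k hk
        have := h k (by omega)
        rwa [Function.update_of_ne (by omega)] at this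
    have hdis : Pairwise (Function.onFun Disjoint
        (fun v : Fin 3 => {ω | ∀ k < m + 1, X k ω = (Function.update w m v) k})) := by
      intro a b hab
      rw [Function.onFun, Set.disjoint_left]
      intro ω h1 h2
      have e1 := h1 m (by omega)
      have e2 := h2 m (by omega)
      simp only [Function.update_self] at e1 e2
      exact hab (e1.symm.trans e2)
    rw [hun, lintegral_iUnion (fun v => hmeas _ _) hdis, tsum_fintype]
    have key : ∀ v : Fin 3, ∫⁻ ω in {ω | ∀ k < m + 1, X k ω = (Function.update w m v) k},
        ENNReal.ofReal
          (f (heightProcess (starGraph 3) (fun _ => 0) (fun k => X k ω) (m + (n + 1)))) ∂μ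
        = (3 : ℝ≥0∞)⁻¹ ^ (m + 1) * ENNReal.ofReal
          (avg^[n] f (sstep v (heightProcess (starGraph 3) (fun _ => 0) w m))) := by
      intro v
      have := ih (m + 1) (Function.update w m v)
      rw [show m + (n + 1) = m + 1 + n by ring, this, hp_succ]
      simp only [Function.update_self]
      rw [hp_congr (X := Function.update w m v) (Y := w)]
      intro k hk
      rw [Function.update_of_ne (by omega)]
    simp only [key]
    rw [← Finset.mul_sum, pow_succ, mul_assoc]
    congr 1
    rw [Function.iterate_succ_apply', Fin.sum_univ_three]
    have hn := avg_iter_nonneg hf n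
    rw [← ENNReal.ofReal_add (hn _) (hn _),
      ← ENNReal.ofReal_add (add_nonneg (hn _) (hn _)) (hn _)]
    have h3 : (3 : ℝ≥0∞)⁻¹ = ENNReal.ofReal (3⁻¹) := by
      rw [ENNReal.ofReal_inv_of_pos (by norm_num)]; simp
    rw [h3, ← ENNReal.ofReal_mul (by norm_num)]
    congr 1
    unfold avg
    ring

lemma exp_eq {Ω : Type} [MeasurableSpace Ω] (μ : Measure Ω)
    (X : ℕ → Ω → Fin 3) (hX : IsUniformIID μ X) (f : (Fin 3 → ℕ) → ℝ) (hf : ∀ h, 0 ≤ f h)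
    (n : ℕ) :
    ∫⁻ ω, ENNReal.ofReal (f (heightProcess (starGraph 3) (fun _ => 0) (fun k => X k ω) n)) ∂μ
    = ENNReal.ofReal (avg^[n] f (fun _ => 0)) := by
  have := cyl_lintegral μ X hX f hf n 0 (fun _ => 0)
  simpa [heightProcess] using this

/-- maximal height -/
def mx (h : Fin 3 → ℕ) : ℕ := max (max (h 0) (h 1)) (h 2)

/-- discrepancy of the two leaves since the last deposition at the centre -/
def dd (h : Fin 3 → ℕ) : ℕ :=
  ((h 1 - h 0) - (h 2 - h 0)) + ((h 2 - h 0) - (h 1 - h 0))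

lemma step0 (h : Fin 3 → ℕ) : mx (sstep 0 h) = mx h + 1 ∧ dd (sstep 0 h) = 0 := by
  simp [mx, dd, sstep]; omega

lemma step12 (h : Fin 3 → ℕ) :
    (dd h = 0 ∧ (mx (sstep 1 h) = mx h + 1 ∧ dd (sstep 1 h) = 1)
      ∧ (mx (sstep 2 h) = mx h + 1 ∧ dd (sstep 2 h) = 1)) ∨
    (∃ e, dd h = e + 1 ∧
     (((mx (sstep 1 h) = mx h + 1 ∧ dd (sstep 1 h) = e + 2)
      ∧ (mx (sstep 2 h) = mx h ∧ dd (sstep 2 h) = e)) ∨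
     ((mx (sstep 2 h) = mx h + 1 ∧ dd (sstep 2 h) = e + 2)
      ∧ (mx (sstep 1 h) = mx h ∧ dd (sstep 1 h) = e)))) := by
  simp only [mx, dd, sstep]
  simp
  generalize h 0 = a
  generalize h 1 = b
  generalize h 2 = c
  rcases Nat.lt_trichotomy (b - a) (c - a) with h0 | h0 | h0
  · right
    exact ⟨(c - a) - (b - a) - 1, by omega, Or.inr ⟨⟨by omega, by omega⟩, by omega, by omega⟩⟩
  · left
    exact ⟨by omega, ⟨by omega, by omega⟩, by omega, by omega⟩
  · right
    exact ⟨(b - a) - (c - a) - 1, by omega, Or.inl ⟨⟨by omega, by omega⟩, by omega, by omega⟩⟩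

/-- total deficit -/
noncomputable def uu (h : Fin 3 → ℕ) : ℝ :=
  4 * ((mx h : ℝ) - h 0) + ((mx h : ℝ) - h 1) + ((mx h : ℝ) - h 2)

lemma le_mx (h : Fin 3 → ℕ) (x : Fin 3) : h x ≤ mx h := by
  fin_cases x <;> simp [mx]

lemma uu_ge (h : Fin 3 → ℕ) (x : Fin 3) : (mx h : ℝ) - h x ≤ uu h := by
  have h0 : (h 0 : ℝ) ≤ mx h := by exact_mod_cast le_mx h 0
  have h1 : (h 1 : ℝ) ≤ mx h := by exact_mod_cast le_mx h 1
  have h2 : (h 2 : ℝ) ≤ mx h := by exact_mod_cast le_mx h 2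
  unfold uu
  fin_cases x <;> simp <;> linarith

lemma uu_nonneg (h : Fin 3 → ℕ) : 0 ≤ uu h := by
  have h0 : (h 0 : ℝ) ≤ mx h := by exact_mod_cast le_mx h 0
  have h1 : (h 1 : ℝ) ≤ mx h := by exact_mod_cast le_mx h 1
  have h2 : (h 2 : ℝ) ≤ mx h := by exact_mod_cast le_mx h 2
  unfold uu; linarith

lemma avg_uu (h : Fin 3 → ℕ) : avg uu h ≤ 5 / 6 * uu h + 4 := by
  obtain ⟨ua, hua⟩ : ∃ z : ℤ, z = 4 * ((mx h : ℤ) - h 0) + ((mx h : ℤ) - h 1) + ((mx h : ℤ) - h 2) :=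
    ⟨_, rfl⟩
  have key : ∀ h : Fin 3 → ℕ, uu h =
      ((4 * ((mx h : ℤ) - h 0) + ((mx h : ℤ) - h 1) + ((mx h : ℤ) - h 2) : ℤ) : ℝ) := by
    intro h; unfold uu; push_cast; ring
  have main : 2 * ((4 * ((mx (sstep 0 h) : ℤ) - sstep 0 h 0) + ((mx (sstep 0 h) : ℤ) - sstep 0 h 1)
        + ((mx (sstep 0 h) : ℤ) - sstep 0 h 2))
      + (4 * ((mx (sstep 1 h) : ℤ) - sstep 1 h 0) + ((mx (sstep 1 h) : ℤ) - sstep 1 h 1)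
        + ((mx (sstep 1 h) : ℤ) - sstep 1 h 2))
      + (4 * ((mx (sstep 2 h) : ℤ) - sstep 2 h 0) + ((mx (sstep 2 h) : ℤ) - sstep 2 h 1)
        + ((mx (sstep 2 h) : ℤ) - sstep 2 h 2)))
      ≤ 5 * (4 * ((mx h : ℤ) - h 0) + ((mx h : ℤ) - h 1) + ((mx h : ℤ) - h 2)) + 24 := by
    simp [mx, sstep]; omega
  unfold avg
  simp only [key]
  have := (Int.cast_le (R := ℝ)).2 main
  push_cast at this ⊢
  linarith

lemma avg_iter_uu (n : ℕ) : ∀ h, avg^[n] uu h ≤ uu h + 24 := by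
  have : ∀ n h, avg^[n] uu h ≤ (5 / 6) ^ n * uu h + 24 * (1 - (5 / 6) ^ n) := by
    intro n
    induction n with
    | zero => intro h; simp
    | succ n ih =>
      intro h
      rw [Function.iterate_succ_apply']
      refine (avg_mono ih h).trans ?_
      have h1 := avg_uu h
      have : avg (fun h => (5 / 6 : ℝ) ^ n * uu h + 24 * (1 - (5 / 6) ^ n)) h
          = (5 / 6) ^ n * avg uu h + 24 * (1 - (5 / 6) ^ n) := by unfold avg; ring
      rw [this]
      have hp : (0 : ℝ) ≤ (5 / 6) ^ n := by positivity
      have := mul_le_mul_of_nonneg_left h1 hp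
      rw [pow_succ]; linarith
  intro h
  have hp : (0 : ℝ) ≤ (5 / 6) ^ n := by positivity
  have hp1 : (5 / 6 : ℝ) ^ n ≤ 1 := pow_le_one₀ (by norm_num) (by norm_num)
  have := this n h
  nlinarith [uu_nonneg h]

/-- the compensated maximum -/
noncomputable def zz (n : ℕ) (h : Fin 3 → ℕ) : ℝ :=
  mx h + ((3 - √5) / 2) ^ dd h / √5 - n * ((2 + 1 / √5) / 3)

lemma rfacts : (0 : ℝ) < (3 - √5) / 2 ∧ (3 - √5) / 2 < 1 ∧ 2 < √5 := by
  have h1 : (2 : ℝ) < √5 := by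
    rw [Real.lt_sqrt] <;> norm_num
  have h2 : √5 < (3 : ℝ) := by
    rw [Real.sqrt_lt'] <;> norm_num
  refine ⟨by linarith, by linarith, h1⟩

lemma avg_zz (n : ℕ) (h : Fin 3 → ℕ) :
    avg (fun h => zz (n + 1) h ^ 2) h ≤ zz n h ^ 2 + 9 := by
  obtain ⟨hr0, hr1, h5⟩ := rfacts
  obtain ⟨a, b⟩ := step0 h
  have hs : √5 * √5 = (5 : ℝ) := Real.mul_self_sqrt (by norm_num)
  set c : ℝ := 1 / √5 with hc
  have hsc : √5 = 5 * c := by rw [hc]; field_simp; linarith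
  have hcpos : 0 < c := by positivity
  have hc2 : 5 * (c * c) = 1 := by rw [hsc] at hs; linarith
  have hc1 : c < 1 / 2 := by nlinarith
  set r : ℝ := (3 - √5) / 2 with hr
  have hrc : r = (3 - 5 * c) / 2 := by rw [hr, hsc]
  have hrr : r * r = 3 * r - 1 := by rw [hrc]; nlinarith
  have zdef : ∀ n h, zz n h = mx h + r ^ dd h * c - n * ((2 + c) / 3) := by
    intro n h; simp only [zz, ← hr, hc]; ring
  have gen : ∀ z x1 x2 x3 : ℝ, x1 + x2 + x3 = 0 → |x1| ≤ 3 → |x2| ≤ 3 → |x3| ≤ 3 →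
      ((z + x1) ^ 2 + (z + x2) ^ 2 + (z + x3) ^ 2) / 3 ≤ z ^ 2 + 9 := by
    intro z x1 x2 x3 hsum h1 h2 h3
    have e1 : x1 ^ 2 ≤ 9 := by have := sq_le_sq' (abs_le.1 h1).1 (abs_le.1 h1).2; linarith
    have e2 : x2 ^ 2 ≤ 9 := by have := sq_le_sq' (abs_le.1 h2).1 (abs_le.1 h2).2; linarith
    have e3 : x3 ^ 2 ≤ 9 := by have := sq_le_sq' (abs_le.1 h3).1 (abs_le.1 h3).2; linarith
    have : z * (x1 + x2 + x3) = 0 := by rw [hsum, mul_zero]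
    nlinarith
  have pb : ∀ k : ℕ, 0 ≤ r ^ k * c ∧ r ^ k * c ≤ 1 / 2 := by
    intro k
    have h1 : r ^ k ≤ 1 := pow_le_one₀ hr0.le hr1.le
    have h0 : 0 ≤ r ^ k := by positivity
    exact ⟨by positivity, by nlinarith⟩
  have hdiff : ∀ h' : Fin 3 → ℕ, zz (n + 1) h' = zz n h +
      (((mx h' : ℝ) - mx h) + r ^ dd h' * c - r ^ dd h * c - (2 + c) / 3) := by
    intro h'; rw [zdef, zdef]; push_cast; ring
  have hb : ∀ h' : Fin 3 → ℕ, (mx h' = mx h + 1 ∨ mx h' = mx h) →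
      |((mx h' : ℝ) - mx h) + r ^ dd h' * c - r ^ dd h * c - (2 + c) / 3| ≤ 3 := by
    intro h' hh
    have p1 := pb (dd h')
    have p2 := pb (dd h)
    rw [abs_le]
    rcases hh with hh | hh <;> rw [hh] <;> push_cast <;> constructor <;> linarith
  simp only [avg]
  rw [hdiff (sstep 0 h), hdiff (sstep 1 h), hdiff (sstep 2 h)]
  have b0 := hb (sstep 0 h) (Or.inl a)
  rcases step12 h with ⟨d0, ⟨m1, d1⟩, ⟨m2, d2⟩⟩ | ⟨e, d0, ⟨⟨m1, d1⟩, ⟨m2, d2⟩⟩ | ⟨⟨m2, d2⟩, ⟨m1, d1⟩⟩⟩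
  all_goals
    refine gen _ _ _ _ ?_ b0 (hb _ (by omega)) (hb _ (by omega))
    rw [a, b, m1, d1, m2, d2, d0]
    push_cast
  · rw [hrc]; linarith
  · have : r ^ e * c * (r * r) = r ^ e * c * (3 * r - 1) := by rw [hrr]
    ring_nf at this ⊢
    linarith
  · have : r ^ e * c * (r * r) = r ^ e * c * (3 * r - 1) := by rw [hrr]
    ring_nf at this ⊢
    linarith

lemma avg_iter_zz (n : ℕ) : ∀ k h, avg^[n] (fun h => zz (k + n) h ^ 2) h ≤ zz k h ^ 2 + 9 * n := by
  induction n with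
  | zero => intro k h; simp
  | succ n ih =>
    intro k h
    rw [Function.iterate_succ_apply']
    have ih' : ∀ h, avg^[n] (fun h => zz (k + (n + 1)) h ^ 2) h ≤ zz (k + 1) h ^ 2 + 9 * n := by
      intro h
      have := ih (k + 1) h
      rwa [show k + 1 + n = k + (n + 1) by ring] at this
    refine (avg_mono ih' h).trans ?_
    have h1 := avg_zz k h
    have : avg (fun h => zz (k + 1) h ^ 2 + 9 * n) h
        = avg (fun h => zz (k + 1) h ^ 2) h + 9 * n := by unfold avg; ring
    rw [this]; push_cast; linarith

lemma bc {Ω : Type} [MeasurableSpace Ω] (μ : Measure Ω) (Y : ℕ → Ω → ℝ)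
    (hY0 : ∀ k ω, 0 ≤ Y k ω) (hm : ∀ k, Measurable (Y k)) (C : ℝ)
    (hY : ∀ k : ℕ, ∫⁻ ω, ENNReal.ofReal (Y k ω) ∂μ ≤ ENNReal.ofReal (C * (1 / ((k : ℝ) + 1) ^ 2))) :
    ∀ᵐ ω ∂μ, Tendsto (fun k => Y k ω) atTop (𝓝 0) := by
  have hsum : Summable (fun k : ℕ => C * (1 / ((k : ℝ) + 1) ^ 2)) := by
    apply Summable.mul_left
    have := (summable_nat_add_iff 1).2 (Real.summable_one_div_nat_pow.2 (by norm_num : 1 < 2))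
    simpa using this
  have h1 : ∫⁻ ω, ∑' k, ENNReal.ofReal (Y k ω) ∂μ ≠ ∞ := by
    rw [lintegral_tsum (fun k => (hm k).ennreal_ofReal.aemeasurable)]
    exact ne_top_of_le_ne_top hsum.tsum_ofReal_ne_top (ENNReal.tsum_le_tsum hY)
  filter_upwards [ae_lt_top (Measurable.ennreal_tsum fun k => (hm k).ennreal_ofReal) h1] with ω hω
  have := ENNReal.tendsto_atTop_zero_of_tsum_ne_top hω.ne
  have h2 := (ENNReal.tendsto_toReal ENNReal.zero_ne_top).comp this
  simpa [Function.comp_def, ENNReal.toReal_ofReal (hY0 _ _)] using h2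

lemma hp_mono (X : ℕ → Fin 3) (x : Fin 3) :
    Monotone (fun n => (heightProcess (starGraph 3) (fun _ => 0) X n x : ℝ)) := by
  apply monotone_nat_of_le_succ
  intro n
  rw [hp_succ]
  generalize heightProcess (starGraph 3) (fun _ => 0) X n = h
  norm_cast
  unfold sstep
  split_ifs with h1 h2
  · have := le_mx h x
    unfold mx at this
    omega
  · subst h1; omega
  · exact le_rfl

lemma hp_meas {Ω : Type} [MeasurableSpace Ω] (μ : Measure Ω)
    (X : ℕ → Ω → Fin 3) (hX : IsUniformIID μ X) (n : ℕ) :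
    Measurable (fun ω => heightProcess (starGraph 3) (fun _ => 0) (fun k => X k ω) n) := by
  have hXm : ∀ n, Measurable (X n) := fun n => measurable_to_countable' (fun v => hX.1 n v)
  induction n with
  | zero => exact measurable_const
  | succ n ih =>
    simp only [hp_succ]
    have : Measurable (fun p : Fin 3 × (Fin 3 → ℕ) => sstep p.1 p.2) := measurable_of_countable _
    exact this.comp ((hXm n).prodMk ih)

lemma hp_tendsto {Ω : Type} [MeasurableSpace Ω] (μ : Measure Ω)
    (X : ℕ → Ω → Fin 3) (hX : IsUniformIID μ X) :
    ∀ᵐ ω ∂μ, ∀ x, Tendsto (fun n : ℕ =>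
      (heightProcess (starGraph 3) (fun _ => 0) (fun k => X k ω) n x : ℝ) / n)
      atTop (𝓝 ((2 + 1 / √5) / 3)) := by
  obtain ⟨hr0, hr1, h5⟩ := rfacts
  have A := bc μ (fun k ω => (zz ((k + 1) ^ 2) (heightProcess (starGraph 3) (fun _ => 0)
      (fun k => X k ω) ((k + 1) ^ 2)) / ((k : ℝ) + 1) ^ 2) ^ 2)
    (fun k ω => sq_nonneg _)
    (fun k => by
      have : Measurable (fun h => (zz ((k + 1) ^ 2) h / ((k : ℝ) + 1) ^ 2) ^ 2) :=
        measurable_of_countable _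
      exact this.comp (hp_meas μ X hX _)) 10
    (fun k => by
      have hk : (0 : ℝ) < ((k : ℝ) + 1) ^ 2 := by positivity
      rw [exp_eq μ X hX (fun h => (zz ((k + 1) ^ 2) h / ((k : ℝ) + 1) ^ 2) ^ 2)
        (fun h => sq_nonneg _)]
      apply ENNReal.ofReal_le_ofReal
      have hlin : ∀ (n : ℕ) (f : (Fin 3 → ℕ) → ℝ) (a : ℝ) h,
          avg^[n] (fun h => f h * a) h = avg^[n] f h * a := by
        intro n f a
        induction n with
        | zero => intro h; rfl
        | succ n ih =>
          intro h
          rw [Function.iterate_succ_apply', Function.iterate_succ_apply']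
          rw [funext ih]
          simp only [avg]
          ring
      have h1 := avg_iter_zz ((k + 1) ^ 2) 0 (fun _ => 0)
      have h0 : zz 0 (fun _ => 0) ^ 2 ≤ 1 := by
        simp only [zz, mx, dd]
        simp
        linarith
      have e : (fun h => (zz ((k + 1) ^ 2) h / ((k : ℝ) + 1) ^ 2) ^ 2)
          = fun h => zz ((k + 1) ^ 2) h ^ 2 * (1 / (((k : ℝ) + 1) ^ 2) ^ 2) := by
        funext h; rw [div_pow]; ring
      rw [e, hlin]
      rw [zero_add] at h1
      push_cast at h1
      have h2 : (1 : ℝ) ≤ ((k : ℝ) + 1) ^ 2 := by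
        have : (0 : ℝ) ≤ k := by positivity
        nlinarith
      have h3 : avg^[(k + 1) ^ 2] (fun h => zz ((k + 1) ^ 2) h ^ 2) (fun _ => 0)
          ≤ 10 * ((k : ℝ) + 1) ^ 2 := by linarith
      calc _ ≤ 10 * ((k : ℝ) + 1) ^ 2 * (1 / (((k : ℝ) + 1) ^ 2) ^ 2) := by gcongr
        _ = _ := by field_simp)
  have B := bc μ (fun k ω => uu (heightProcess (starGraph 3) (fun _ => 0)
      (fun k => X k ω) ((k + 1) ^ 2)) * (1 / ((k : ℝ) + 1) ^ 2))
    (fun k ω => mul_nonneg (uu_nonneg _) (by positivity))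
    (fun k => by
      have : Measurable (fun h => uu h * (1 / ((k : ℝ) + 1) ^ 2)) :=
        measurable_of_countable _
      exact this.comp (hp_meas μ X hX _)) 24
    (fun k => by
      have hk : (0 : ℝ) ≤ 1 / ((k : ℝ) + 1) ^ 2 := by positivity
      simp only [ENNReal.ofReal_mul (uu_nonneg _)]
      rw [lintegral_mul_const' _ _ ENNReal.ofReal_ne_top, exp_eq μ X hX uu uu_nonneg,
        ENNReal.ofReal_mul (by norm_num)]
      gcongr
      have := avg_iter_uu ((k + 1) ^ 2) (fun _ => 0)
      simpa [uu, mx] using this)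
  filter_upwards [A, B] with ω hA hB x
  set H := fun n => heightProcess (starGraph 3) (fun _ => 0) (fun k => X k ω) n with hH
  have hA' : Tendsto (fun k : ℕ => |zz ((k + 1) ^ 2) (H ((k + 1) ^ 2)) / ((k : ℝ) + 1) ^ 2|)
      atTop (𝓝 0) := by
    have := hA.sqrt
    simpa only [Real.sqrt_sq_eq_abs, Real.sqrt_zero] using this
  have hC : Tendsto (fun k : ℕ => 1 / ((k : ℝ) + 1) ^ 2) atTop (𝓝 0) := by
    have := (tendsto_one_div_add_atTop_nhds_zero_nat (𝕜 := ℝ)).pow 2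
    simpa using this
  have hsub : Tendsto (fun k : ℕ => (H ((k + 1) ^ 2) x : ℝ) / (((k + 1) ^ 2 : ℕ) : ℝ))
      atTop (𝓝 ((2 + 1 / √5) / 3)) := by
    rw [tendsto_iff_norm_sub_tendsto_zero]
    have hsum := (hA'.add hB).add hC
    simp only [add_zero] at hsum
    refine squeeze_zero (fun _ => norm_nonneg _) (fun k => ?_) hsum
    have hk : (0 : ℝ) < ((k : ℝ) + 1) ^ 2 := by positivity
    have hle : (H ((k + 1) ^ 2) x : ℝ) ≤ mx (H ((k + 1) ^ 2)) := by
      exact_mod_cast le_mx (H ((k + 1) ^ 2)) x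
    have hu := uu_ge (H ((k + 1) ^ 2)) x
    have hz : zz ((k + 1) ^ 2) (H ((k + 1) ^ 2)) = mx (H ((k + 1) ^ 2)) +
      ((3 - √5) / 2) ^ dd (H ((k + 1) ^ 2)) / √5
        - (((k + 1) ^ 2 : ℕ) : ℝ) * ((2 + 1 / √5) / 3) := rfl
    have hg0 : 0 ≤ ((3 - √5) / 2) ^ dd (H ((k + 1) ^ 2)) / √5 := by positivity
    have hg1 : ((3 - √5) / 2) ^ dd (H ((k + 1) ^ 2)) / √5 ≤ 1 := by
      rw [div_le_one (by linarith)]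
      have : ((3 - √5) / 2) ^ dd (H ((k + 1) ^ 2)) ≤ 1 := pow_le_one₀ hr0.le hr1.le
      linarith
    push_cast at hz ⊢
    generalize zz ((k + 1) ^ 2) (H ((k + 1) ^ 2)) = Z at *
    generalize ((3 - √5) / 2) ^ dd (H ((k + 1) ^ 2)) / √5 = g at *
    change _ ≤ |Z / ((k : ℝ) + 1) ^ 2| + uu (H ((k + 1) ^ 2)) * (1 / ((k : ℝ) + 1) ^ 2) + _
    generalize uu (H ((k + 1) ^ 2)) = U at *
    generalize (mx (H ((k + 1) ^ 2)) : ℝ) = M at *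
    generalize (H ((k + 1) ^ 2) x : ℝ) = y at *
    generalize ((k : ℝ) + 1) ^ 2 = N at *
    generalize (2 + 1 / √5) / 3 = q at *
    rw [Real.norm_eq_abs, show y / N - q = (y - N * q) / N by field_simp, abs_div, abs_div,
      abs_of_pos hk]
    rw [show |Z| / N + U * (1 / N) + 1 / N = (|Z| + U + 1) / N by ring]
    gcongr
    have := abs_le.1 (le_refl |Z|)
    rw [abs_le]
    constructor <;> linarith
  refine tendsto_div_of_monotone_of_exists_subseq_tendsto_div
    (fun n => (H n x : ℝ)) _ (hp_mono _ x) ?_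
  intro a ha
  refine ⟨fun k => (k + 1) ^ 2, ?_, ?_, hsub⟩
  · have : Tendsto (fun k : ℕ => (1 + 1 / ((k : ℝ) + 1)) ^ 2) atTop (𝓝 ((1 + 0) ^ 2)) :=
      ((tendsto_one_div_add_atTop_nhds_zero_nat (𝕜 := ℝ)).const_add 1).pow 2
    have h := this.eventually (gt_mem_nhds (by simpa using ha))
    filter_upwards [h] with k hk
    push_cast
    have e : ((k : ℝ) + 1 + 1) ^ 2 = (1 + 1 / ((k : ℝ) + 1)) ^ 2 * ((k : ℝ) + 1) ^ 2 := by
      field_simp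
    rw [e]; gcongr
  · apply tendsto_atTop_mono (fun k => ?_) tendsto_id
    simp only [id]
    nlinarith

theorem stmt2 : IsGrowthRate (starGraph 3) (2 + 1 / Real.sqrt 5) := by
  refine ⟨by positivity, ?_⟩
  intro Ω _ μ _ X hX
  have hmain := hp_tendsto μ X hX
  have hsup : ∀ f : Fin 3 → ℝ, (⨆ x, f x) = max (max (f 0) (f 1)) (f 2) := by
    intro f
    apply le_antisymm
    · apply ciSup_le
      intro x; fin_cases x <;> simp
    · have hb : BddAbove (Set.range f) := (Set.finite_range f).bddAbove
      exact max_le (max_le (le_ciSup hb 0) (le_ciSup hb 1)) (le_ciSup hb 2)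
  have hinf : ∀ f : Fin 3 → ℝ, (⨅ x, f x) = min (min (f 0) (f 1)) (f 2) := by
    intro f
    apply le_antisymm
    · have hb : BddBelow (Set.range f) := (Set.finite_range f).bddBelow
      exact le_min (le_min (ciInf_le hb 0) (ciInf_le hb 1)) (ciInf_le hb 2)
    · apply le_ciInf
      intro x; fin_cases x <;> simp
  constructor
  · filter_upwards [hmain] with ω hω
    have := (((hω 0).max (hω 1)).max (hω 2)).const_mul 3
    simp only [max_self] at this
    rw [show 3 * ((2 + 1 / √5) / 3) = 2 + 1 / √5 by ring] at this
    refine this.congr fun n => ?_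
    rw [hsup, max_div_div_right (Nat.cast_nonneg n), max_div_div_right (Nat.cast_nonneg n)]
    simp only [Fintype.card_fin]; push_cast; ring
  · filter_upwards [hmain] with ω hω
    have := (((hω 0).min (hω 1)).min (hω 2)).const_mul 3
    simp only [min_self] at this
    rw [show 3 * ((2 + 1 / √5) / 3) = 2 + 1 / √5 by ring] at this
    refine this.congr fun n => ?_
    rw [hinf, min_div_div_right (Nat.cast_nonneg n), min_div_div_right (Nat.cast_nonneg n)]
    simp only [Fintype.card_fin]; push_cast; ring
end

section
/- The cycle graph C_4 on four vertices has growth rate γ(C_4) = 2 + 2/√3. (This corrects a calculation error in Atar–Athreya–Kang, who claimed 3.21 < γ(C_4).) -/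
open MeasureTheory Filter Topology
open scoped ENNReal Classical

/-- The cycle graph `C₄` on four vertices, with edges `{1,2}, {2,3}, {3,4}, {4,1}`. -/
def cycleFour : SimpleGraph (Fin 4) :=
  SimpleGraph.fromRel fun i j => j = i + 1


namespace C4

/-- extension of a finite word by zeros -/
def ext {n : ℕ} (f : Fin n → Fin 4) : ℕ → Fin 4 := fun k => if h : k < n then f ⟨k, h⟩ else 0

lemma ext_snoc {n : ℕ} (g : Fin n → Fin 4) (v : Fin 4) :
    ext (Fin.snoc (α := fun _ => Fin 4) g v) = Function.update (ext g) n v := by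
  funext k
  unfold ext
  by_cases hk : k = n
  · subst hk
    simp [Fin.snoc]
  · rw [Function.update_of_ne hk]
    by_cases h : k < n
    · have h' : k < n + 1 := by omega
      simp [h, h', Fin.snoc]
    · have h' : ¬ k < n + 1 := by omega
      simp [h, h']

/-- martingale-difference data on sequences -/
structure Mart (Y : ℕ → (ℕ → Fin 4) → ℝ) : Prop where
  zero : ∀ X, Y 0 X = 0
  adapted : ∀ n X X', (∀ k < n, X k = X' k) → Y n X = Y n X'
  bdd : ∀ n X v, |Y (n + 1) (Function.update X n v) - Y n X| ≤ 2
  mean : ∀ n X, ∑ v, Y (n + 1) (Function.update X n v) = 4 * Y n X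

lemma Mart.neg {Y : ℕ → (ℕ → Fin 4) → ℝ} (hY : Mart Y) : Mart (fun n X => - Y n X) where
  zero X := by simp [hY.zero]
  adapted n X X' h := by simp [hY.adapted n X X' h]
  bdd n X v := by
    have := hY.bdd n X v
    rw [← abs_neg]
    convert this using 2
    ring
  mean n X := by
    rw [Finset.sum_neg_distrib, hY.mean]; ring

lemma exp_step (y t : ℝ) (ht0 : 0 ≤ t) (ht : t ≤ 1 / 2) (d : Fin 4 → ℝ) (hd : ∀ v, |d v - y| ≤ 2)
    (hm : ∑ v, d v = 4 * y) :
    ∑ v, Real.exp (t * d v) ≤ 4 * Real.exp (4 * t ^ 2) * Real.exp (t * y) := by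
  have h1 : ∀ v, Real.exp (t * d v) ≤ Real.exp (t * y) * (1 + t * (d v - y) + 4 * t ^ 2) := by
    intro v
    have h2 : |t * (d v - y)| ≤ 1 := by
      rw [abs_mul, abs_of_nonneg ht0]
      nlinarith [hd v, abs_nonneg (d v - y)]
    have h3 := (abs_le.1 (Real.abs_exp_sub_one_sub_id_le h2)).2
    have h4 : (t * (d v - y)) ^ 2 ≤ 4 * t ^ 2 := by
      have : (d v - y) ^ 2 ≤ 4 := by
        have := abs_le.1 (hd v)
        nlinarith
      nlinarith [sq_nonneg t]
    have : Real.exp (t * d v) = Real.exp (t * y) * Real.exp (t * (d v - y)) := by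
      rw [← Real.exp_add]; congr 1; ring
    rw [this]
    apply mul_le_mul_of_nonneg_left _ (Real.exp_pos _).le
    linarith
  calc ∑ v, Real.exp (t * d v) ≤ ∑ v, Real.exp (t * y) * (1 + t * (d v - y) + 4 * t ^ 2) :=
        Finset.sum_le_sum fun v _ => h1 v
    _ = Real.exp (t * y) * (4 * (1 + 4 * t ^ 2)) := by
        simp only [Fin.sum_univ_four] at hm ⊢
        linear_combination Real.exp (t * y) * t * hm
    _ ≤ Real.exp (t * y) * (4 * Real.exp (4 * t ^ 2)) := by
        apply mul_le_mul_of_nonneg_left _ (Real.exp_pos _).le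
        linarith [Real.add_one_le_exp (4 * t ^ 2)]
    _ = _ := by ring

lemma exp_sum {Y : ℕ → (ℕ → Fin 4) → ℝ} (hY : Mart Y) (t : ℝ) (ht0 : 0 ≤ t) (ht : t ≤ 1 / 2)
    (n : ℕ) : ∑ f : Fin n → Fin 4, Real.exp (t * Y n (ext f)) ≤ (4 * Real.exp (4 * t ^ 2)) ^ n := by
  induction n with
  | zero => simp [hY.zero]
  | succ n ih =>
    have : ∑ f : Fin (n + 1) → Fin 4, Real.exp (t * Y (n + 1) (ext f))
        = ∑ g : Fin n → Fin 4, ∑ v : Fin 4,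
          Real.exp (t * Y (n + 1) (Function.update (ext g) n v)) := by
      rw [← (Fin.snocEquiv (fun _ : Fin (n + 1) => Fin 4)).sum_comp, Fintype.sum_prod_type,
        Finset.sum_comm]
      refine Finset.sum_congr rfl fun g _ => Finset.sum_congr rfl fun v _ => ?_
      rw [← ext_snoc]
      rfl
    rw [this]
    calc _ ≤ ∑ g : Fin n → Fin 4, 4 * Real.exp (4 * t ^ 2) * Real.exp (t * Y n (ext g)) :=
          Finset.sum_le_sum fun g _ => exp_step _ t ht0 ht _ (fun v => hY.bdd n _ v) (hY.mean n _)
      _ = 4 * Real.exp (4 * t ^ 2) * ∑ g : Fin n → Fin 4, Real.exp (t * Y n (ext g)) := by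
          rw [Finset.mul_sum]
      _ ≤ 4 * Real.exp (4 * t ^ 2) * (4 * Real.exp (4 * t ^ 2)) ^ n :=
          mul_le_mul_of_nonneg_left ih (by positivity)
      _ = _ := by ring

lemma tail {Ω : Type} [MeasurableSpace Ω] (μ : Measure Ω) (X : ℕ → Ω → Fin 4)
    (hX : IsUniformIID μ X) {Y : ℕ → (ℕ → Fin 4) → ℝ} (hY : Mart Y) (ε : ℝ) (hε : 0 < ε)
    (hε' : ε ≤ 4) (n : ℕ) :
    μ {ω | ε * n ≤ Y n (fun k => X k ω)} ≤ ENNReal.ofReal (Real.exp (-(ε ^ 2 / 16)) ^ n) := by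
  set B : Finset (Fin n → Fin 4) := Finset.univ.filter (fun f => ε * n ≤ Y n (ext f)) with hB
  have hsub : {ω | ε * n ≤ Y n (fun k => X k ω)} ⊆
      ⋃ f ∈ B, {ω | ∀ k < n, X k ω = ext f k} := by
    intro ω hω
    simp only [Set.mem_iUnion]
    have hag : ∀ k < n, X k ω = ext (fun i : Fin n => X i ω) k := by
      intro k hk; simp [ext, hk]
    refine ⟨fun i => X i ω, ?_, hag⟩
    simp only [hB, Finset.mem_filter, Finset.mem_univ, true_and]
    rw [← hY.adapted n (fun k => X k ω) _ hag]
    exact hω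
  have h1 : μ {ω | ε * n ≤ Y n (fun k => X k ω)} ≤ B.card * (4 : ℝ≥0∞)⁻¹ ^ n := by
    refine (measure_mono hsub).trans ((measure_biUnion_finset_le _ _).trans ?_)
    rw [Finset.sum_congr rfl (fun f _ => hX.2 n (ext f))]
    simp
  have h2 : (B.card : ℝ) * Real.exp (ε / 8 * (ε * n)) ≤ (4 * Real.exp (4 * (ε / 8) ^ 2)) ^ n := by
    refine le_trans ?_ (exp_sum hY (ε / 8) (by positivity) (by linarith) n)
    rw [← nsmul_eq_mul]
    refine (Finset.card_nsmul_le_sum B (fun f => Real.exp (ε / 8 * Y n (ext f))) _ ?_).trans ?_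
    · intro f hf
      simp only [hB, Finset.mem_filter, Finset.mem_univ, true_and] at hf
      apply Real.exp_le_exp.2
      gcongr
    · exact Finset.sum_le_sum_of_subset_of_nonneg (Finset.subset_univ _)
        (fun _ _ _ => (Real.exp_pos _).le)
  have h3 : (B.card : ℝ) * (4 : ℝ)⁻¹ ^ n ≤ Real.exp (-(ε ^ 2 / 16)) ^ n := by
    have e1 : Real.exp (-(ε ^ 2 / 16)) ^ n =
        (Real.exp (4 * (ε / 8) ^ 2)) ^ n * (Real.exp (ε / 8 * (ε * n)))⁻¹ := by
      rw [← Real.exp_nat_mul, ← Real.exp_nat_mul, ← Real.exp_neg, ← Real.exp_add]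
      congr 1; ring
    rw [e1, ← div_eq_mul_inv, le_div_iff₀ (Real.exp_pos _), mul_right_comm, inv_pow,
      ← div_eq_mul_inv, div_le_iff₀ (by positivity)]
    rw [mul_pow] at h2
    linarith
  refine h1.trans ?_
  have e2 : (B.card : ℝ≥0∞) * (4 : ℝ≥0∞)⁻¹ ^ n = ENNReal.ofReal ((B.card : ℝ) * (4 : ℝ)⁻¹ ^ n) := by
    rw [ENNReal.ofReal_mul (by positivity), ENNReal.ofReal_natCast,
      ENNReal.ofReal_pow (by positivity), ENNReal.ofReal_inv_of_pos (by norm_num)]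
    simp
  rw [e2]
  exact ENNReal.ofReal_le_ofReal h3

lemma upper {Ω : Type} [MeasurableSpace Ω] (μ : Measure Ω) (X : ℕ → Ω → Fin 4)
    (hX : IsUniformIID μ X) {Y : ℕ → (ℕ → Fin 4) → ℝ} (hY : Mart Y) (ε : ℝ) (hε : 0 < ε)
    (hε' : ε ≤ 4) :
    ∀ᵐ ω ∂μ, ∀ᶠ n : ℕ in atTop, Y n (fun k => X k ω) < ε * n := by
  have hs : ∑' n, μ {ω | ε * n ≤ Y n (fun k => X k ω)} ≠ ∞ := by
    have hq : Real.exp (-(ε ^ 2 / 16)) < 1 := by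
      rw [Real.exp_lt_one_iff]
      have : 0 < ε ^ 2 := by positivity
      linarith
    have hsum := summable_geometric_of_lt_one (Real.exp_pos _).le hq
    refine ne_top_of_le_ne_top ?_ (ENNReal.tsum_le_tsum (fun n => tail μ X hX hY ε hε hε' n))
    exact hsum.tsum_ofReal_ne_top
  filter_upwards [ae_eventually_notMem hs] with ω hω
  filter_upwards [hω] with n hn
  simpa using hn

lemma lln {Ω : Type} [MeasurableSpace Ω] (μ : Measure Ω) (X : ℕ → Ω → Fin 4)
    (hX : IsUniformIID μ X) {Y : ℕ → (ℕ → Fin 4) → ℝ} (hY : Mart Y) :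
    ∀ᵐ ω ∂μ, Tendsto (fun n : ℕ => Y n (fun k => X k ω) / n) atTop (𝓝 0) := by
  have h : ∀ m : ℕ, ∀ᵐ ω ∂μ, ∀ᶠ n : ℕ in atTop,
      |Y n (fun k => X k ω)| < (1 / ((m : ℝ) + 1)) * n := by
    intro m
    have hle : 1 / ((m : ℝ) + 1) ≤ 4 := by
      rw [div_le_iff₀ (by positivity)]
      have : (0 : ℝ) ≤ m := by positivity
      linarith
    filter_upwards [upper μ X hX hY (1 / ((m : ℝ) + 1)) (by positivity) hle,
      upper μ X hX hY.neg (1 / ((m : ℝ) + 1)) (by positivity) hle] with ω h1 h2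
    filter_upwards [h1, h2] with n h1 h2
    rw [abs_lt]; constructor <;> linarith
  filter_upwards [ae_all_iff.2 h] with ω hω
  rw [Metric.tendsto_nhds]
  intro ε hε
  obtain ⟨m, hm⟩ := exists_nat_one_div_lt hε
  filter_upwards [hω m, eventually_gt_atTop 0] with n hn hn0
  have hn0' : (0 : ℝ) < n := by exact_mod_cast hn0
  rw [Real.dist_eq, sub_zero, abs_div, abs_of_pos hn0', div_lt_iff₀ hn0']
  nlinarith

/-! ### The dynamics -/

/-- one step of the process on C4 -/
def step (v : Fin 4) (h : Fin 4 → ℕ) : Fin 4 → ℕ := fun x =>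
  if x = v then 1 + max (h v) (max (h (v + 1)) (h (v + 3))) else h x

noncomputable abbrev H (n : ℕ) (X : ℕ → Fin 4) : Fin 4 → ℕ :=
  heightProcess cycleFour (fun _ => 0) X n

lemma H_succ (n : ℕ) (X : ℕ → Fin 4) : H (n + 1) X = step (X n) (H n X) := by
  funext x
  simp only [H, heightProcess, step]
  by_cases hx : x = X n
  · rw [if_pos hx, if_pos hx, ← hx]
    congr 1
    generalize heightProcess cycleFour (fun _ => 0) X n = h
    have : (Finset.univ : Finset (Fin 4)) = {0, 1, 2, 3} := by decide
    rw [this]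
    fin_cases x <;> simp [cycleFour] <;> omega
  · rw [if_neg hx, if_neg hx]

lemma H_adapted (n : ℕ) (X X' : ℕ → Fin 4) (h : ∀ k < n, X k = X' k) : H n X = H n X' := by
  induction n with
  | zero => rfl
  | succ n ih => rw [H_succ, H_succ, ih fun k hk => h k (by omega), h n (by omega)]

lemma H_update (n : ℕ) (X : ℕ → Fin 4) (v : Fin 4) :
    H (n + 1) (Function.update X n v) = step v (H n X) := by
  rw [H_succ, Function.update_self]
  rw [H_adapted n (Function.update X n v) X]
  intro k hk
  rw [Function.update_of_ne (by omega)]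

/-- the maximum -/
def MM (p q s u : ℕ) : ℕ := max (max p q) (max s u)

/-- the imbalance on the leading side -/
def DD (p q s u : ℕ) : ℕ :=
  (max s u - max (min s u) (max p q)) + (max p q - max (min p q) (max s u))

lemma MM_swap (p q s u : ℕ) : MM q p s u = MM p q s u := by unfold MM; omega
lemma MM_flip (p q s u : ℕ) : MM s u p q = MM p q s u := by unfold MM; omega
lemma DD_swap (p q s u : ℕ) : DD q p s u = DD p q s u := by
  unfold DD; rw [max_comm q p, min_comm q p]
lemma DD_flip (p q s u : ℕ) : DD s u p q = DD p q s u := by unfold DD; omega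

lemma arith (p q s u : ℕ) :
    let p' := 1 + max p (max s u)
    (DD p q s u = 0 → MM p' q s u = MM p q s u + 1 ∧ DD p' q s u = 1) ∧
    (max p q < max s u → MM p' q s u = MM p q s u + 1 ∧ DD p' q s u = 1) ∧
    (max s u ≤ max p q → q < p →
      MM p' q s u = MM p q s u + 1 ∧ DD p' q s u = DD p q s u + 1) ∧
    (DD p q s u ≠ 0 → max s u ≤ max p q → p ≤ q →
      MM p' q s u = MM p q s u ∧ DD p' q s u = DD p q s u - 1) := by
  intro p'
  have hp' : p' = 1 + max p (max s u) := rfl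
  clear_value p'
  unfold MM DD
  generalize hm : max s u = m at *
  generalize hl : min s u = l at *
  have hlm : l ≤ m := by omega
  clear hm hl
  subst hp'
  refine ⟨?_, ?_, ?_, ?_⟩ <;> simp only [Nat.max_def, Nat.min_def] <;> intros <;>
    constructor <;> split_ifs at * <;> omega

/-- the maximum -/
def M (h : Fin 4 → ℕ) : ℕ := MM (h 0) (h 2) (h 1) (h 3)

/-- the imbalance on the leading side -/
def D (h : Fin 4 → ℕ) : ℕ := DD (h 0) (h 2) (h 1) (h 3)

lemma step_zero (h : Fin 4 → ℕ) (F : ℕ → ℕ → ℕ → ℕ → ℕ) :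
    F (step 0 h 0) (step 0 h 2) (step 0 h 1) (step 0 h 3) =
      F (1 + max (h 0) (max (h 1) (h 3))) (h 2) (h 1) (h 3) := by
  simp [step]
lemma step_one (h : Fin 4 → ℕ) (F : ℕ → ℕ → ℕ → ℕ → ℕ) :
    F (step 1 h 0) (step 1 h 2) (step 1 h 1) (step 1 h 3) =
      F (h 0) (h 2) (1 + max (h 1) (max (h 0) (h 2))) (h 3) := by
  have e1 : (1 : Fin 4) + 1 = 2 := by decide
  have e2 : (1 : Fin 4) + 3 = 0 := by decide
  simp [step, e1, e2, max_comm (h 2) (h 0)]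
lemma step_two (h : Fin 4 → ℕ) (F : ℕ → ℕ → ℕ → ℕ → ℕ) :
    F (step 2 h 0) (step 2 h 2) (step 2 h 1) (step 2 h 3) =
      F (h 0) (1 + max (h 2) (max (h 1) (h 3))) (h 1) (h 3) := by
  have e1 : (2 : Fin 4) + 1 = 3 := by decide
  have e2 : (2 : Fin 4) + 3 = 1 := by decide
  simp [step, e1, e2, max_comm (h 3) (h 1)]
lemma step_three (h : Fin 4 → ℕ) (F : ℕ → ℕ → ℕ → ℕ → ℕ) :
    F (step 3 h 0) (step 3 h 2) (step 3 h 1) (step 3 h 3) =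
      F (h 0) (h 2) (h 1) (1 + max (h 3) (max (h 0) (h 2))) := by
  have e1 : (3 : Fin 4) + 1 = 0 := by decide
  have e2 : (3 : Fin 4) + 3 = 2 := by decide
  simp [step, e1, e2]

lemma key (h : Fin 4 → ℕ) : (D h = 0 ∧ ∀ v, M (step v h) = M h + 1 ∧ D (step v h) = 1) ∨
      (D h ≠ 0 ∧ ∃ a b c d : Fin 4, (∀ F : Fin 4 → ℝ, ∑ v, F v = F a + F b + F c + F d) ∧
        (∀ v, v = a ∨ v = b ∨ v = c ∨ v = d) ∧
        (M (step a h) = M h + 1 ∧ D (step a h) = 1) ∧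
        (M (step b h) = M h + 1 ∧ D (step b h) = 1) ∧
        (M (step c h) = M h + 1 ∧ D (step c h) = D h + 1) ∧
        (M (step d h) = M h ∧ D (step d h) = D h - 1)) := by
  have m0 : M (step 0 h) = MM (1 + max (h 0) (max (h 1) (h 3))) (h 2) (h 1) (h 3) := step_zero h MM
  have d0 : D (step 0 h) = DD (1 + max (h 0) (max (h 1) (h 3))) (h 2) (h 1) (h 3) := step_zero h DD
  have m2 : M (step 2 h) = MM (1 + max (h 2) (max (h 1) (h 3))) (h 0) (h 1) (h 3) :=
    (step_two h MM).trans (MM_swap _ _ _ _)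
  have d2 : D (step 2 h) = DD (1 + max (h 2) (max (h 1) (h 3))) (h 0) (h 1) (h 3) :=
    (step_two h DD).trans (DD_swap _ _ _ _)
  have m1 : M (step 1 h) = MM (1 + max (h 1) (max (h 0) (h 2))) (h 3) (h 0) (h 2) :=
    (step_one h MM).trans (MM_flip _ _ _ _)
  have d1 : D (step 1 h) = DD (1 + max (h 1) (max (h 0) (h 2))) (h 3) (h 0) (h 2) :=
    (step_one h DD).trans (DD_flip _ _ _ _)
  have m3 : M (step 3 h) = MM (1 + max (h 3) (max (h 0) (h 2))) (h 1) (h 0) (h 2) :=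
    (step_three h MM).trans ((MM_flip _ _ _ _).trans (MM_swap _ _ _ _))
  have d3 : D (step 3 h) = DD (1 + max (h 3) (max (h 0) (h 2))) (h 1) (h 0) (h 2) :=
    (step_three h DD).trans ((DD_flip _ _ _ _).trans (DD_swap _ _ _ _))
  have eM2 : MM (h 2) (h 0) (h 1) (h 3) = M h := MM_swap _ _ _ _
  have eD2 : DD (h 2) (h 0) (h 1) (h 3) = D h := DD_swap _ _ _ _
  have eM1 : MM (h 1) (h 3) (h 0) (h 2) = M h := MM_flip _ _ _ _
  have eD1 : DD (h 1) (h 3) (h 0) (h 2) = D h := DD_flip _ _ _ _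
  have eM3 : MM (h 3) (h 1) (h 0) (h 2) = M h := (MM_swap _ _ _ _).trans (MM_flip _ _ _ _)
  have eD3 : DD (h 3) (h 1) (h 0) (h 2) = D h := (DD_swap _ _ _ _).trans (DD_flip _ _ _ _)
  have A0 := arith (h 0) (h 2) (h 1) (h 3)
  have A2 := arith (h 2) (h 0) (h 1) (h 3)
  have A1 := arith (h 1) (h 3) (h 0) (h 2)
  have A3 := arith (h 3) (h 1) (h 0) (h 2)
  dsimp only at A0 A1 A2 A3
  rw [← m0, ← d0, show MM (h 0) (h 2) (h 1) (h 3) = M h from rfl,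
    show DD (h 0) (h 2) (h 1) (h 3) = D h from rfl] at A0
  rw [← m2, ← d2, eM2, eD2, max_comm (h 2) (h 0)] at A2
  rw [← m1, ← d1, eM1, eD1] at A1
  rw [← m3, ← d3, eM3, eD3, max_comm (h 3) (h 1)] at A3
  have hz : max (h 0) (h 2) = max (h 1) (h 3) → D h = 0 := by
    intro e; unfold D DD; omega
  have hz0 : h 0 = h 2 → max (h 1) (h 3) ≤ max (h 0) (h 2) → D h = 0 := by
    intro e e'; unfold D DD; omega
  have hz1 : h 1 = h 3 → max (h 0) (h 2) ≤ max (h 1) (h 3) → D h = 0 := by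
    intro e e'; unfold D DD; omega
  clear m0 d0 m1 d1 m2 d2 m3 d3 eM2 eD2 eM1 eD1 eM3 eD3
  by_cases hD : D h = 0
  · left
    refine ⟨hD, fun v => ?_⟩
    fin_cases v
    · exact A0.1 hD
    · exact A1.1 hD
    · exact A2.1 hD
    · exact A3.1 hD
  · right
    refine ⟨hD, ?_⟩
    rcases lt_trichotomy (max (h 0) (h 2)) (max (h 1) (h 3)) with hl | hl | hl
    · rcases lt_trichotomy (h 1) (h 3) with g | g | g
      · exact ⟨0, 2, 3, 1, fun F => by rw [Fin.sum_univ_four]; ring, by decide,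
          A0.2.1 hl, A2.2.1 hl, A3.2.2.1 hl.le g, A1.2.2.2 hD hl.le g.le⟩
      · exact absurd (hz1 g hl.le) hD
      · exact ⟨0, 2, 1, 3, fun F => by rw [Fin.sum_univ_four]; ring, by decide,
          A0.2.1 hl, A2.2.1 hl, A1.2.2.1 hl.le g, A3.2.2.2 hD hl.le g.le⟩
    · exact absurd (hz hl) hD
    · rcases lt_trichotomy (h 0) (h 2) with g | g | g
      · exact ⟨1, 3, 2, 0, fun F => by rw [Fin.sum_univ_four]; ring, by decide,
          A1.2.1 hl, A3.2.1 hl, A2.2.2.1 hl.le g, A0.2.2.2 hD hl.le g.le⟩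
      · exact absurd (hz0 g hl.le) hD
      · exact ⟨1, 3, 0, 2, fun F => by rw [Fin.sum_univ_four]; ring, by decide,
          A1.2.1 hl, A3.2.1 hl, A0.2.2.1 hl.le g, A2.2.2.2 hD hl.le g.le⟩

lemma step_cases (h : Fin 4 → ℕ) (v : Fin 4) :
    (M (step v h) = M h + 1) ∨ (M (step v h) = M h) := by
  rcases key h with ⟨_, hk⟩ | ⟨_, a, b, c, d, _, hv, ha, hb, hc, hd⟩
  · exact Or.inl (hk v).1
  · rcases hv v with rfl | rfl | rfl | rfl
    · exact Or.inl ha.1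
    · exact Or.inl hb.1
    · exact Or.inl hc.1
    · exact Or.inr hd.1

lemma sum_step (h : Fin 4 → ℕ) (ψ : ℕ → ℕ → ℝ) :
    ∑ v, ψ (M (step v h)) (D (step v h)) =
      if D h = 0 then 4 * ψ (M h + 1) 1
      else 2 * ψ (M h + 1) 1 + ψ (M h + 1) (D h + 1) + ψ (M h) (D h - 1) := by
  rcases key h with ⟨hD, hk⟩ | ⟨hD, a, b, c, d, hF, _, ha, hb, hc, hd⟩
  · rw [if_pos hD, Fin.sum_univ_four]
    simp only [hk]
    ring
  · rw [if_neg hD, hF, ha.1, ha.2, hb.1, hb.2, hc.1, hc.2, hd.1, hd.2]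
    ring

/-- the root `2 - √3` -/
noncomputable def r : ℝ := 2 - Real.sqrt 3
/-- the constant `1/(2√3)` -/
noncomputable def c : ℝ := Real.sqrt 3 / 6

lemma s3 : Real.sqrt 3 * Real.sqrt 3 = 3 := Real.mul_self_sqrt (by norm_num)

lemma s3_bd : 1 ≤ Real.sqrt 3 ∧ Real.sqrt 3 ≤ 2 := by
  constructor
  · rw [Real.le_sqrt] <;> norm_num
  · rw [Real.sqrt_le_left] <;> norm_num

lemma r_sq : r ^ 2 = 4 * r - 1 := by
  unfold r; linear_combination s3

lemma c_eq : c * (2 - r) = 1 / 2 := by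
  unfold c r; linear_combination s3 / 6

lemma f_bd (k : ℕ) : 0 ≤ c * r ^ k ∧ c * r ^ k ≤ 1 / 2 := by
  have hr0 : 0 ≤ r := by unfold r; linarith [s3_bd.2]
  have hr1 : r ≤ 1 := by unfold r; linarith [s3_bd.1]
  have hc0 : 0 ≤ c := by unfold c; positivity
  have hc1 : c ≤ 1 / 2 := by unfold c; linarith [s3_bd.2]
  have h1 := pow_le_one₀ hr0 hr1 (n := k)
  have h2 := pow_nonneg hr0 k
  constructor
  · positivity
  · nlinarith

/-- the martingale -/
noncomputable def Y (n : ℕ) (X : ℕ → Fin 4) : ℝ :=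
  (M (H n X) : ℝ) + c * r ^ (D (H n X)) - c - n * (1 / 2 + c)

lemma mart_Y : Mart Y where
  zero X := by simp [Y, M, D, MM, DD, H, heightProcess]
  adapted n X X' h := by simp only [Y, H_adapted n X X' h]
  bdd n X v := by
    simp only [Y, H_update]
    have h1 := f_bd (D (step v (H n X)))
    have h2 := f_bd (D (H n X))
    have h3 := f_bd 0
    simp only [pow_zero, mul_one] at h3
    rcases step_cases (H n X) v with hM | hM <;> rw [hM, abs_le] <;> push_cast <;>
      constructor <;> linarith
  mean n X := by
    simp only [Y, H_update]
    rw [sum_step (H n X) (fun m d => (m : ℝ) + c * r ^ d - c - ((n + 1 : ℕ) : ℝ) * (1 / 2 + c))]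
    have hr := r_sq
    have hc := c_eq
    split_ifs with hD
    · rw [hD]; push_cast
      linear_combination (-4) * hc
    · obtain ⟨k, hk⟩ := Nat.exists_eq_succ_of_ne_zero hD
      rw [hk]
      simp only [Nat.succ_eq_add_one, Nat.add_sub_cancel]
      push_cast
      rw [pow_succ, pow_succ]
      linear_combination (-2) * hc + c * r ^ k * hr

/-- hit counts -/
def N (x : Fin 4) (n : ℕ) (X : ℕ → Fin 4) : ℕ := ∑ k ∈ Finset.range n, if X k = x then 1 else 0

lemma mart_N (x : Fin 4) : Mart (fun n X => (N x n X : ℝ) - n / 4) where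
  zero X := by simp [N]
  adapted n X X' h := by
    have : N x n X = N x n X' :=
      Finset.sum_congr rfl fun k hk => by rw [h k (Finset.mem_range.1 hk)]
    simp only [this]
  bdd n X v := by
    have : N x n (Function.update X n v) = N x n X :=
      Finset.sum_congr rfl fun k hk => by
        rw [Function.update_of_ne (Finset.mem_range.1 hk).ne]
    have h2 : N x (n + 1) (Function.update X n v) = N x n X + if v = x then 1 else 0 := by
      rw [← this, N, Finset.sum_range_succ, Function.update_self]; rfl
    simp only [h2, abs_le]
    split_ifs <;> push_cast <;> constructor <;> linarith
  mean n X := by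
    have : ∀ v, N x n (Function.update X n v) = N x n X := fun v =>
      Finset.sum_congr rfl fun k hk => by
        rw [Function.update_of_ne (Finset.mem_range.1 hk).ne]
    have h2 : ∀ v, N x (n + 1) (Function.update X n v) = N x n X + if v = x then 1 else 0 := by
      intro v
      rw [← this v, N, Finset.sum_range_succ, Function.update_self]; rfl
    simp only [h2]
    push_cast
    simp only [Finset.sum_sub_distrib, Finset.sum_add_distrib]
    simp
    ring

lemma le_step (v : Fin 4) (h : Fin 4 → ℕ) (x : Fin 4) : h x ≤ step v h x := by
  unfold step
  split_ifs with hx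
  · subst hx; omega
  · exact le_rfl

lemma H_mono (X : ℕ → Fin 4) (x : Fin 4) : Monotone (fun n => H n X x) :=
  monotone_nat_of_le_succ fun n => by
    show H n X x ≤ H (n + 1) X x
    rw [H_succ]; exact le_step _ _ _

lemma le_M (h : Fin 4 → ℕ) (x : Fin 4) : h x ≤ M h := by
  fin_cases x <;> simp [M, MM]

lemma exists_M (h : Fin 4 → ℕ) : ∃ x, M h = h x := by
  by_contra! hc
  have h0 := hc 0
  have h1 := hc 1
  have h2 := hc 2
  have h3 := hc 3
  unfold M MM at *
  omega

/-- if `x` is hit between times `a` and `b`, then it exceeds the initial values of neighbours -/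
lemma hit (X : ℕ → Fin 4) (x : Fin 4) (a b : ℕ) (hab : a ≤ b) (hN : N x a X < N x b X) :
    H a X (x + 1) ≤ H b X x ∧ H a X (x + 3) ≤ H b X x := by
  have : ∃ k, a ≤ k ∧ k < b ∧ X k = x := by
    by_contra! hcon
    apply hN.ne
    unfold N
    rw [← Finset.sum_range_add_sum_Ico _ hab]
    rw [Finset.sum_eq_zero (s := Finset.Ico a b)]
    · simp
    · intro k hk
      rw [Finset.mem_Ico] at hk
      rw [if_neg (hcon k hk.1 hk.2)]
  obtain ⟨k, hak, hkb, hk⟩ := this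
  have h1 : H (k + 1) X x ≤ H b X x := H_mono X x hkb
  have h2 : H a X (x + 1) ≤ H k X (x + 1) := H_mono X _ hak
  have h3 : H a X (x + 3) ≤ H k X (x + 3) := H_mono X _ hak
  rw [H_succ, hk, step, if_pos rfl] at h1
  constructor
  · refine h2.trans (le_trans ?_ h1)
    have := le_max_left (H k X (x + 1)) (H k X (x + 3))
    have := le_max_right (H k X x) (max (H k X (x + 1)) (H k X (x + 3)))
    omega
  · refine h3.trans (le_trans ?_ h1)
    have := le_max_right (H k X (x + 1)) (H k X (x + 3))
    have := le_max_right (H k X x) (max (H k X (x + 1)) (H k X (x + 3)))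
    omega

lemma two_windows (X : ℕ → Fin 4) (a b d : ℕ) (hab : a ≤ b) (hbd : b ≤ d)
    (h1 : ∀ x, N x a X < N x b X) (h2 : ∀ x, N x b X < N x d X) (x : Fin 4) :
    M (H a X) ≤ H d X x := by
  obtain ⟨y, hy⟩ := exists_M (H a X)
  rw [hy]
  have m1 := fun z => H_mono X z hab
  have m2 := fun z => H_mono X z hbd
  have k1 := fun z => hit X z a b hab (h1 z)
  have k2 := fun z => hit X z b d hbd (h2 z)
  have e1 : x = y ∨ x = y + 1 ∨ x = y + 2 ∨ x = y + 3 := by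
    clear * -; revert x y; decide
  have a1 := m1 y
  have a2 := m2 y
  rcases e1 with rfl | rfl | rfl | rfl
  · exact a1.trans a2
  · have := (k1 (y + 1)).2
    have e : y + 1 + 3 = y := by clear * -; revert y; decide
    rw [e] at this
    exact this.trans (m2 _)
  · have := (k1 (y + 1)).2
    have e : y + 1 + 3 = y := by clear * -; revert y; decide
    rw [e] at this
    have t := (k2 (y + 2)).2
    have e : y + 2 + 3 = y + 1 := by clear * -; revert y; decide
    rw [e] at t
    exact this.trans t
  · have := (k1 (y + 3)).1
    have e : y + 3 + 1 = y := by clear * -; revert y; decide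
    rw [e] at this
    exact this.trans (m2 _)

lemma iSup_eq (h : Fin 4 → ℕ) : (⨆ x, (h x : ℝ)) = M h := by
  apply le_antisymm
  · exact ciSup_le fun x => by exact_mod_cast le_M h x
  · obtain ⟨x, hx⟩ := exists_M h
    rw [hx]
    exact le_ciSup (f := fun x => (h x : ℝ)) (Set.finite_range _).bddAbove x

lemma tendsto_floor {u : ℕ → ℝ} {l : ℝ} (hu : Tendsto (fun n : ℕ => u n / n) atTop (𝓝 l))
    {q : ℝ} (hq : 0 < q) :
    Tendsto (fun n : ℕ => u ⌊q * n⌋₊ / n) atTop (𝓝 (l * q)) := by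
  have h1 : Tendsto (fun n : ℕ => ⌊q * n⌋₊) atTop atTop :=
    tendsto_nat_floor_atTop.comp (tendsto_natCast_atTop_atTop.const_mul_atTop hq)
  have h2 : Tendsto (fun n : ℕ => ((⌊q * n⌋₊ : ℕ) : ℝ) / n) atTop (𝓝 q) :=
    (tendsto_nat_floor_mul_div_atTop hq.le).comp tendsto_natCast_atTop_atTop
  refine ((hu.comp h1).mul h2).congr' ?_
  filter_upwards [h1.eventually_gt_atTop 0] with n hn
  have : ((⌊q * n⌋₊ : ℕ) : ℝ) ≠ 0 := by exact_mod_cast hn.ne'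
  simp only [Function.comp]
  field_simp

end C4

open C4 in
theorem stmt3 : IsGrowthRate cycleFour (2 + 2 / Real.sqrt 3) := by
  have hγ : 2 + 2 / Real.sqrt 3 = 4 * (1 / 2 + c) := by
    have h0 : Real.sqrt 3 ≠ 0 := by positivity
    unfold c
    field_simp
    nlinarith [s3]
  refine ⟨by positivity, ?_⟩
  intro Ω _ μ _ X hX
  rw [hγ]
  have hM : ∀ᵐ ω ∂μ, Tendsto (fun n : ℕ => (M (H n fun k => X k ω) : ℝ) / n) atTop
      (𝓝 (1 / 2 + c)) := by
    filter_upwards [lln μ X hX mart_Y] with ω hω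
    have hb : Tendsto (fun n : ℕ => (c - c * r ^ (D (H n fun k => X k ω))) / n) atTop (𝓝 0) := by
      apply squeeze_zero_norm (a := fun n : ℕ => 1 / (n : ℝ)) _ tendsto_one_div_atTop_nhds_zero_nat
      intro n
      rw [norm_div, Real.norm_eq_abs, Real.norm_natCast]
      apply div_le_div_of_nonneg_right _ (Nat.cast_nonneg n)
      have h1 := f_bd (D (H n fun k => X k ω))
      have h3 := f_bd 0
      simp only [pow_zero, mul_one] at h3
      rw [abs_le]; constructor <;> linarith
    have := (hω.add hb).add_const (1 / 2 + c)
    simp only [add_zero, zero_add] at this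
    refine this.congr' ?_
    filter_upwards [eventually_gt_atTop 0] with n hn
    have : (n : ℝ) ≠ 0 := by exact_mod_cast hn.ne'
    unfold Y
    field_simp
    ring
  have hN : ∀ᵐ ω ∂μ, ∀ x, Tendsto (fun n : ℕ => (N x n (fun k => X k ω) : ℝ) / n) atTop
      (𝓝 (1 / 4)) := by
    rw [ae_all_iff]
    intro x
    filter_upwards [lln μ X hX (mart_N x)] with ω hω
    have := hω.add_const (1 / 4)
    simp only [zero_add] at this
    refine this.congr' ?_
    filter_upwards [eventually_gt_atTop 0] with n hn
    have : (n : ℝ) ≠ 0 := by exact_mod_cast hn.ne'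
    field_simp
    ring
  constructor
  · filter_upwards [hM] with ω hω
    refine (hω.const_mul 4).congr fun n => ?_
    rw [iSup_eq]
    simp
    ring
  · filter_upwards [hM, hN] with ω hω hNω
    set x := fun k => X k ω with hx
    have hub : ∀ n, (⨅ y : Fin 4, (H n x y : ℝ)) ≤ M (H n x) := fun n =>
      (ciInf_le (Set.finite_range _).bddBelow 0).trans (by exact_mod_cast le_M _ _)
    have hc0 : 0 ≤ c := by unfold c; positivity
    have main : Tendsto (fun n : ℕ => (⨅ y : Fin 4, (H n x y : ℝ)) / n) atTop (𝓝 (1 / 2 + c)) := by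
      rw [tendsto_order]
      constructor
      · intro a ha
        -- choose q
        have hq : ∃ q : ℝ, 0 < q ∧ q < 1 ∧ a < (1 / 2 + c) * q ^ 2 := by
          have hcont : Tendsto (fun q : ℝ => (1 / 2 + c) * q ^ 2) (𝓝[<] 1) (𝓝 (1 / 2 + c)) := by
            have : Continuous (fun q : ℝ => (1 / 2 + c) * q ^ 2) := by fun_prop
            have := this.tendsto 1
            simp only [one_pow, mul_one] at this
            exact this.mono_left nhdsWithin_le_nhds
          have h1 := hcont.eventually_const_lt ha
          have h2 : ∀ᶠ q : ℝ in 𝓝[<] 1, q ∈ Set.Ioo (0 : ℝ) 1 :=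
            Ioo_mem_nhdsLT (by norm_num)
          obtain ⟨q, hq1, hq2⟩ := (h1.and h2).exists
          exact ⟨q, hq2.1, hq2.2, hq1⟩
        obtain ⟨q, hq0, hq1, hqa⟩ := hq
        have hfl : Tendsto (fun n : ℕ => ⌊q * n⌋₊) atTop atTop :=
          tendsto_nat_floor_atTop.comp (tendsto_natCast_atTop_atTop.const_mul_atTop hq0)
        have hle : ∀ n : ℕ, ⌊q * n⌋₊ ≤ n := fun n => by
          apply Nat.floor_le_of_le
          have : (0 : ℝ) ≤ n := Nat.cast_nonneg n
          nlinarith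
        have hwin : ∀ᶠ n : ℕ in atTop, ∀ y, N y ⌊q * n⌋₊ x < N y n x := by
          rw [eventually_all]
          intro y
          have h1 := tendsto_floor (hNω y) hq0
          have h2 := (h1.eventually_lt (hNω y) (by linarith))
          filter_upwards [h2, eventually_gt_atTop 0] with n hn hn0
          have hn0' : (0 : ℝ) < n := by exact_mod_cast hn0
          rw [div_lt_div_iff_of_pos_right hn0'] at hn
          exact_mod_cast hn
        have hlow := tendsto_floor (tendsto_floor hω hq0) hq0
        have hlow' : Tendsto (fun n : ℕ => (M (H ⌊q * ⌊q * n⌋₊⌋₊ x) : ℝ) / n) atTop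
            (𝓝 ((1 / 2 + c) * q ^ 2)) := by
          have := tendsto_floor (u := fun n : ℕ => (M (H ⌊q * n⌋₊ x) : ℝ))
            (tendsto_floor (u := fun n : ℕ => (M (H n x) : ℝ)) hω hq0) hq0
          rw [pow_two, ← mul_assoc]
          exact this
        filter_upwards [hlow'.eventually_const_lt hqa, hwin, hfl.eventually hwin] with n h1 h2 h3
        refine h1.trans_le ?_
        apply div_le_div_of_nonneg_right _ (Nat.cast_nonneg n)
        apply le_ciInf
        intro y
        exact_mod_cast two_windows x _ _ _ (hle _) (hle _) h3 h2 y
      · intro a ha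
        filter_upwards [hω.eventually_lt_const ha] with n hn
        refine lt_of_le_of_lt ?_ hn
        exact div_le_div_of_nonneg_right (hub n) (Nat.cast_nonneg n)
    refine (main.const_mul 4).congr fun n => ?_
    simp only [Fintype.card_fin, H]
    push_cast
    ring
end
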